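/- Let Γ = (T, ℓ) be a bunch of grapes such that some path in the stem T contains every vertex v of T with ℓ(v) ≥ 1. Then the graph 2-braid group B₂(Γ) is isomorphic to a right-angled Artin group: there exists a finite simple graph Λ such that B₂(Γ) ≅ A_Λ. -/

import Mathlib

/-!
Why `B₂(Γ)` is a right-angled Artin group.

**Topology.** Two points `p.1 ≠ p.2` of `|Γ|` have some vertex `u` with `p.2 u < p.1 u` and some
vertex `v` with `p.1 v < p.2 v`.  The sets `starSet Γ (u, v)` of pairs satisfying both inequalities
cover the ordered configuration space, are star-shaped about `(e_u, e_v)`, embed into the unordered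
configuration space, and the straight paths inside them are governed by moves of a single point
along an edge while the other one rests at a vertex, subject to one relation for each pair of
disjoint edges.  So a homomorphism from the fundamental group to a group `G` amounts, up to
coboundaries, to a `G`-valued labelling of such moves that respects these relations
(`IsCocycle`).  One direction is the monodromy of a locally constant cocycle on the open cover
(`exists_holonomy`, `exists_compare`), the other one is given by the classes of the moves
(`edgeClass`); `exists_dictionary` combines both.

**Combinatorics.** Since the grapes lie along a path, `Γ` has a rooted spanning tree numbered in
depth-first order such that the vertices carrying grapes form a chain of descendants and the
branch containing the grapes comes last among its siblings (`GrapeTree`, `exists_grapeTree`).  Any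
cocycle can be normalized to be trivial on a spanning tree of the configuration graph
(`GrapeTree.exists_normalized`).  The squares then determine all labels from those of
the critical moves (`GrapeTree.Gen`), and the relations that remain say exactly that a
grape `j`, with the other point above it, commutes with a grape `i` closer to the root, with the
other point in the branch containing `j`.  Hence the labelling by the generators of the
right-angled Artin group of `GrapeTree.genGraph` is a universal cocycle
(`GrapeTree.exists_universal`).

**Conclusion.** Universality gives a homomorphism `ψ` from the Artin group to (the opposite of)
`π₁`, the dictionary one, `φ`, in the other direction, and both composites are inner automorphisms
(`nonempty_mulEquiv_of_universal`).
-/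

open scoped Classical

noncomputable section

namespace GraphBraid

/-- The standard basis vector `e_v` in `ℝ^V`. -/
def basisVec {V : Type} [DecidableEq V] (v : V) : V → ℝ := fun w => if w = v then 1 else 0

/-- The geometric realization of a simple graph, as the subspace of `ℝ^V` given by the
union over the edges of the straight segments joining the corresponding basis vectors. -/
def realization {V : Type} [DecidableEq V] (G : SimpleGraph V) : Set (V → ℝ) :=
  ⋃ (u : V) (v : V) (_ : G.Adj u v), segment ℝ (basisVec u) (basisVec v)

/-- The realization of a subgraph, as a subspace of `ℝ^V`. -/
def subRealization {V : Type} [DecidableEq V] {G : SimpleGraph V} (H : G.Subgraph) :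
    Set (V → ℝ) :=
  ⋃ (u : V) (v : V) (_ : H.Adj u v), segment ℝ (basisVec u) (basisVec v)

/-- The ordered `n`-point configuration space of a topological space. -/
abbrev Conf (n : ℕ) (X : Type) [TopologicalSpace X] : Type :=
  {f : Fin n → X // Function.Injective f}

/-- Two ordered configurations are related when they differ by a permutation of coordinates. -/
def permRel (n : ℕ) (X : Type) [TopologicalSpace X] (f g : Conf n X) : Prop :=
  ∃ σ : Equiv.Perm (Fin n), (f : Fin n → X) = (g : Fin n → X) ∘ σ

/-- The unordered `n`-point configuration space: the quotient of the ordered configuration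
space by the symmetric group permuting coordinates. -/
abbrev UConf (n : ℕ) (X : Type) [TopologicalSpace X] : Type :=
  Quot (permRel n X)

/-- A group is free when it is isomorphic to `FreeGroup S` for some set `S`. -/
def IsFreeGroupType (G : Type*) [Group G] : Prop :=
  ∃ S : Type, Nonempty (G ≃* FreeGroup S)

/-- A cycle subgraph: a subgraph with at least one edge which is connected and all of whose
vertices have degree exactly two (inside the subgraph). -/
def IsCycleSubgraph {W : Type*} {G : SimpleGraph W} (H : G.Subgraph) : Prop :=
  H.edgeSet.Nonempty ∧ H.Connected ∧ ∀ v ∈ H.verts, (H.neighborSet v).ncard = 2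


/-- The vertex type of a bunch of grapes over a stem with vertex type `VT`:
the stem vertices together with, for each vertex `v` and each of the `ℓ v` grapes at `v`,
two new vertices completing a triangle at `v`. -/
def GrapeVert (VT : Type) (ℓ : VT → ℕ) : Type :=
  VT ⊕ (Σ v : VT, Fin (ℓ v) × Fin 2)

instance (VT : Type) [Fintype VT] [DecidableEq VT] (ℓ : VT → ℕ) : Fintype (GrapeVert VT ℓ) := by
  unfold GrapeVert; infer_instance

instance (VT : Type) [DecidableEq VT] (ℓ : VT → ℕ) : DecidableEq (GrapeVert VT ℓ) := by
  unfold GrapeVert; infer_instance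

/-- The stem vertex underlying a vertex of the bunch of grapes. -/
def stemOf {VT : Type} {ℓ : VT → ℕ} : GrapeVert VT ℓ → VT :=
  Sum.elim id (fun p => p.1)

/-- The bunch of grapes `Γ = (T, ℓ)`: the graph obtained from the stem `T` by attaching
`ℓ v` triangles (grapes) at each vertex `v` of `T`. -/
def bunchOfGrapes {VT : Type} (T : SimpleGraph VT) (ℓ : VT → ℕ) :
    SimpleGraph (GrapeVert VT ℓ) :=
  SimpleGraph.fromEdgeSet
    ({e | ∃ u v : VT, T.Adj u v ∧ e = s(Sum.inl u, Sum.inl v)} ∪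
     {e | ∃ (v : VT) (i : Fin (ℓ v)) (j : Fin 2), e = s(Sum.inl v, Sum.inr ⟨v, (i, j)⟩)} ∪
     {e | ∃ (v : VT) (i : Fin (ℓ v)), e = s(Sum.inr ⟨v, (i, 0)⟩, Sum.inr ⟨v, (i, 1)⟩)})

/-- A bunch of grapes is normal when at least two distinct stem vertices carry a grape and
every leaf of the stem carries a grape; following the standing assumption, every degree-2
stem vertex also carries a grape.  The stem is required to be a finite tree. -/
def IsNormalGrapes {VT : Type} (T : SimpleGraph VT) (ℓ : VT → ℕ) : Prop :=
  T.IsTree ∧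
  (∃ v w : VT, v ≠ w ∧ 1 ≤ ℓ v ∧ 1 ≤ ℓ w) ∧
  (∀ v : VT, (T.neighborSet v).ncard = 1 → 1 ≤ ℓ v) ∧
  (∀ v : VT, (T.neighborSet v).ncard = 2 → 1 ≤ ℓ v)

/-- Membership in the side of the edge `{a,b}` of the stem containing `a`: a vertex of the
bunch of grapes lies in the `t`-component `Γ_{t,1}` (for `t = {a,b}`) when its stem vertex
is reachable from `a` after deleting the edge `{a,b}` from `T`. -/
def inSide {VT : Type} (T : SimpleGraph VT) (ℓ : VT → ℕ) (a b : VT)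
    (x : GrapeVert VT ℓ) : Prop :=
  (T.deleteEdges {s(a, b)}).Reachable a (stemOf x)



/-- The right-angled Artin group of a simple graph `Λ`: the group presented by the vertices
of `Λ` with commutation relations along the edges. -/
def RAAG {W : Type} (Λ : SimpleGraph W) : Type :=
  PresentedGroup {r : FreeGroup W |
    ∃ u v : W, Λ.Adj u v ∧
      r = FreeGroup.of u * FreeGroup.of v * (FreeGroup.of u)⁻¹ * (FreeGroup.of v)⁻¹}

instance {W : Type} (Λ : SimpleGraph W) : Group (RAAG Λ) := by
  unfold RAAG; infer_instance

/-! ### Cocycles on the discrete configuration graph -/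

/-- A `G`-valued cocycle on the discretized two-point configuration complex of `Γ`. The value
`L u u₁ x` is attached to the move of one particle along the edge from `u` to `u₁` while the other
one rests at `x ∉ {u, u₁}`. Reversing a move inverts its label, and the two ways around the square
given by a pair of disjoint edges have the same label. -/
structure IsCocycle {V : Type} (Γ : SimpleGraph V) {G : Type} [Group G] (L : V → V → V → G) :
    Prop where
  inv : ∀ u u₁ x, Γ.Adj u u₁ → x ≠ u → x ≠ u₁ → L u₁ u x = (L u u₁ x)⁻¹
  sq : ∀ u u₁ v v₁, Γ.Adj u u₁ → Γ.Adj v v₁ → u ≠ v → u ≠ v₁ → u₁ ≠ v → u₁ ≠ v₁ →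
    L u u₁ v * L v v₁ u₁ = L v v₁ u * L u u₁ v₁

/-- A labelling of the edges of `Γ`, each with one chosen orientation, extends to a cocycle as soon
as it is compatible with the squares spanned by the chosen orientations. -/
theorem exists_cocycle_of_edges {V : Type} {Γ : SimpleGraph V} {G : Type} [Group G] {Ed : Type}
    (src tgt : Ed → V)
    (hadj : ∀ u u', Γ.Adj u u' → ∃ e, (src e = u ∧ tgt e = u') ∨ (src e = u' ∧ tgt e = u))
    (hinj : ∀ e e', src e = src e' → tgt e = tgt e' → e = e')
    (hrev : ∀ e e', src e = tgt e' → tgt e = src e' → False)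
    (Lab : Ed → V → G)
    (hsq : ∀ e f, src e ≠ src f → src e ≠ tgt f → tgt e ≠ src f → tgt e ≠ tgt f →
      Lab e (src f) * Lab f (tgt e) = Lab f (src e) * Lab e (tgt f)) :
    ∃ L : V → V → V → G, IsCocycle Γ L ∧ (∀ e x, L (src e) (tgt e) x = Lab e x) := by
  let L : V → V → V → G := fun u u' x =>
    if h : ∃ e, src e = u ∧ tgt e = u' then Lab h.choose x
    else if h : ∃ e, src e = u' ∧ tgt e = u then (Lab h.choose x)⁻¹ else 1
  have h1 : ∀ e x, L (src e) (tgt e) x = Lab e x := by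
    intro e x
    have h : ∃ e', src e' = src e ∧ tgt e' = tgt e := ⟨e, rfl, rfl⟩
    have : h.choose = e := hinj _ _ h.choose_spec.1 h.choose_spec.2
    simp only [L, dif_pos h, this]
  have h2 : ∀ e x, L (tgt e) (src e) x = (Lab e x)⁻¹ := by
    intro e x
    have h0 : ¬ ∃ e', src e' = tgt e ∧ tgt e' = src e := by
      rintro ⟨e', a, b⟩
      exact hrev _ _ a b
    have h : ∃ e', src e' = src e ∧ tgt e' = tgt e := ⟨e, rfl, rfl⟩
    have : h.choose = e := hinj _ _ h.choose_spec.1 h.choose_spec.2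
    simp only [L, dif_neg h0, dif_pos h, this]
  refine ⟨L, ⟨?_, ?_⟩, h1⟩
  · intro u u' x hu _ _
    obtain ⟨e, (⟨rfl, rfl⟩ | ⟨rfl, rfl⟩)⟩ := hadj u u' hu
    · rw [h1, h2]
    · rw [h1, h2, inv_inv]
  · intro u u' v v' hu hv a1 a2 a3 a4
    obtain ⟨e, (⟨rfl, rfl⟩ | ⟨rfl, rfl⟩)⟩ := hadj u u' hu <;>
    obtain ⟨f, (⟨rfl, rfl⟩ | ⟨rfl, rfl⟩)⟩ := hadj v v' hv <;>
    simp only [h1, h2]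
    · exact hsq e f a1 a2 a3 a4
    · have := hsq e f a2 a1 a4 a3
      rw [← mul_inv_eq_iff_eq_mul.mpr this]
      group
    · have := hsq e f a3 a4 a1 a2
      rw [← mul_inv_eq_iff_eq_mul, inv_inv, mul_assoc, inv_mul_eq_iff_eq_mul]
      exact this.symm
    · have := hsq e f a4 a3 a2 a1
      have := congrArg (·⁻¹) this
      simpa only [mul_inv_rev] using this.symm

/-- A rooted spanning tree of `Γ` with the combinatorics of a bunch of grapes whose grapes lie
along a path starting at the root. The tree is given by its parent function `par`, its vertices are
numbered in depth-first order (`par_lt`, `convex`), and the only edges of `Γ` outside the tree are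
the edges `{v i, b i}` closing up the grapes `v i — par (b i) — b i`. -/
structure GrapeTree {V : Type} [LinearOrder V] (Γ : SimpleGraph V) (I : Type) where
  r : V
  par : V → V
  v : I → V
  b : I → V
  par_root : par r = r
  par_lt : ∀ x, x ≠ r → par x < x
  adj_par : ∀ x, x ≠ r → Γ.Adj (par x) x
  adj_grape : ∀ i, Γ.Adj (v i) (b i)
  adj_cases : ∀ x y, Γ.Adj x y → (y ≠ r ∧ par y = x) ∨ (x ≠ r ∧ par x = y) ∨
    ∃ i, (v i = x ∧ b i = y) ∨ (v i = y ∧ b i = x)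
  /-- Every vertex numbered between a vertex and its parent descends from the parent. -/
  convex : ∀ c x, par c < x → x < c → ∃ n, par^[n] x = par c
  mid_ne : ∀ i, par (b i) ≠ r
  par_par : ∀ i, par (par (b i)) = v i
  leaf : ∀ i x, par x ≠ b i
  only : ∀ i x, par x = par (b i) → x = b i
  /-- The vertices carrying grapes form a chain. -/
  chain : ∀ i j, (∃ n, par^[n] (v i) = v j) ∨ (∃ n, par^[n] (v j) = v i)
  /-- Branches containing grapes come last among their siblings. -/
  largest : ∀ i x, x ≠ r → par x ≠ v i → (∃ n, par^[n] (v i) = par x) → x ≤ v i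

namespace GrapeTree

variable {V : Type} [LinearOrder V] {Γ : SimpleGraph V} {I : Type} (D : GrapeTree Γ I)

/-- `D.desc x w` means that `x` is a descendant of `w`, possibly `w` itself. -/
def desc (x w : V) : Prop := ∃ n, D.par^[n] x = w

theorem desc_refl (x : V) : D.desc x x := ⟨0, rfl⟩

theorem desc_par {x w : V} (h : D.desc (D.par x) w) : D.desc x w := by
  obtain ⟨n, hn⟩ := h
  exact ⟨n + 1, by rwa [Function.iterate_succ_apply]⟩

theorem desc_self_par (x : V) : D.desc x (D.par x) := ⟨1, rfl⟩

theorem iterate_root (n : ℕ) : D.par^[n] D.r = D.r := by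
  induction n with
  | zero => rfl
  | succ n ih => rw [Function.iterate_succ_apply, D.par_root, ih]

theorem desc_cases {x w : V} (h : D.desc x w) : x = w ∨ (x ≠ D.r ∧ D.desc (D.par x) w) := by
  obtain ⟨n, hn⟩ := h
  cases n with
  | zero => exact Or.inl hn
  | succ n =>
    by_cases hx : x = D.r
    · subst hx
      rw [iterate_root] at hn
      exact Or.inl hn
    · exact Or.inr ⟨hx, n, by rwa [Function.iterate_succ_apply] at hn⟩

theorem desc_par_of_ne {x w : V} (h : D.desc x w) (hne : x ≠ w) : D.desc (D.par x) w := by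
  rcases D.desc_cases h with h | h
  · exact absurd h hne
  · exact h.2

theorem par_le (x : V) : D.par x ≤ x := by
  by_cases hx : x = D.r
  · subst hx; rw [D.par_root]
  · exact (D.par_lt x hx).le

theorem desc_le {x w : V} (h : D.desc x w) : w ≤ x := by
  obtain ⟨n, hn⟩ := h
  induction n generalizing x with
  | zero => exact hn.symm.le
  | succ n ih =>
    rw [Function.iterate_succ_apply] at hn
    exact (ih hn).trans (D.par_le x)

theorem desc_trans {x y z : V} (h : D.desc x y) (h' : D.desc y z) : D.desc x z := by
  obtain ⟨n, rfl⟩ := h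
  obtain ⟨m, rfl⟩ := h'
  exact ⟨m + n, Function.iterate_add_apply _ _ _ _⟩

theorem desc_antisymm {x y : V} (h : D.desc x y) (h' : D.desc y x) : x = y :=
  le_antisymm (D.desc_le h') (D.desc_le h)

theorem desc_comparable {x y z : V} (h : D.desc x y) (h' : D.desc x z) :
    D.desc y z ∨ D.desc z y := by
  obtain ⟨n, rfl⟩ := h
  obtain ⟨m, rfl⟩ := h'
  rcases le_total n m with h | h
  · obtain ⟨k, rfl⟩ := Nat.exists_eq_add_of_le h
    left; exact ⟨k, by rw [← Function.iterate_add_apply, add_comm]⟩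
  · obtain ⟨k, rfl⟩ := Nat.exists_eq_add_of_le h
    right; exact ⟨k, by rw [← Function.iterate_add_apply, add_comm]⟩

theorem not_desc_of_lt {x w : V} (h : x < w) : ¬ D.desc x w := fun h' => (D.desc_le h').not_gt h

theorem ne_root_of_par_ne {c w : V} (h : D.par c = w) (hw : w ≠ D.r) : c ≠ D.r := by
  rintro rfl
  exact hw (h.symm.trans D.par_root)

theorem desc_par_iff {x c : V} : D.desc c x ↔ c = x ∨ (c ≠ D.r ∧ D.desc (D.par c) x) :=
  ⟨D.desc_cases, by rintro (rfl | h); exacts [D.desc_refl _, D.desc_par h.2]⟩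

theorem desc_root [WellFoundedLT V] (x : V) : D.desc x D.r := by
  induction x using WellFoundedLT.induction with
  | _ x ih =>
    by_cases hx : x = D.r
    · subst hx; exact D.desc_refl _
    · exact D.desc_par (ih _ (D.par_lt x hx))

theorem exists_branch [WellFoundedLT V] {x w : V} (h : D.desc x w) (hne : x ≠ w) :
    ∃ c, c ≠ D.r ∧ D.par c = w ∧ D.desc x c := by
  induction x using WellFoundedLT.induction with
  | _ x ih =>
    rcases D.desc_cases h with h | ⟨hx, h⟩
    · exact absurd h hne
    · by_cases hp : D.par x = w
      · exact ⟨x, hx, hp, D.desc_refl x⟩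
      · obtain ⟨c, h1, h2, h3⟩ := ih _ (D.par_lt x hx) h hp
        exact ⟨c, h1, h2, D.desc_par h3⟩

theorem branch_unique {x w c c' : V} (hc : c ≠ D.r) (hc' : c' ≠ D.r) (h : D.par c = w)
    (h' : D.par c' = w) (hx : D.desc x c) (hx' : D.desc x c') : c = c' := by
  have key : ∀ c c', c' ≠ D.r → D.par c = w → D.par c' = w → D.desc c c' → c = c' := by
    intro c c' hc' h h' hcc
    by_contra hne
    have := D.desc_le (D.desc_par_of_ne hcc hne)
    have h3 := D.par_lt c' hc'
    rw [h'] at h3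
    rw [h] at this
    exact absurd this h3.not_ge
  rcases D.desc_comparable hx hx' with h1 | h1
  · exact key _ _ hc' h h' h1
  · exact (key _ _ hc h' h h1).symm

/-- The child of `w` whose subtree contains `x`, for a proper descendant `x` of `w`
(and `x` otherwise). -/
def branch (w x : V) : V :=
  if h : ∃ c, c ≠ D.r ∧ D.par c = w ∧ D.desc x c then h.choose else x

theorem branch_eq {x w c : V} (hc : c ≠ D.r) (h : D.par c = w) (hx : D.desc x c) :
    D.branch w x = c := by
  have h' : ∃ c, c ≠ D.r ∧ D.par c = w ∧ D.desc x c := ⟨c, hc, h, hx⟩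
  rw [branch, dif_pos h']
  exact D.branch_unique h'.choose_spec.1 hc h'.choose_spec.2.1 h h'.choose_spec.2.2 hx

theorem branch_par [WellFoundedLT V] {x w : V} (h : D.desc x w) (hne : x ≠ w)
    (hp : D.par x ≠ w) : D.branch w (D.par x) = D.branch w x := by
  obtain ⟨c, h1, h2, h3⟩ := D.exists_branch (D.desc_par_of_ne h hne) hp
  rw [D.branch_eq h1 h2 h3, D.branch_eq h1 h2 (D.desc_par h3)]

theorem v_eq (i : I) : D.v i = D.par (D.par (D.b i)) := (D.par_par i).symm

theorem b_ne (i : I) : D.b i ≠ D.r := D.ne_root_of_par_ne rfl (D.mid_ne i)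

theorem mid_lt (i : I) : D.par (D.b i) < D.b i := D.par_lt _ (D.b_ne i)

theorem v_lt_mid (i : I) : D.v i < D.par (D.b i) := D.par_par i ▸ D.par_lt _ (D.mid_ne i)

theorem v_lt_b (i : I) : D.v i < D.b i := (D.v_lt_mid i).trans (D.mid_lt i)

theorem desc_b_v (i : I) : D.desc (D.b i) (D.v i) := ⟨2, D.par_par i⟩

/-- Proper ancestors of `b i` other than the middle vertex of the grape are ancestors of `v i`. -/
theorem desc_v_of_desc_b {i : I} {w : V} (h : D.desc (D.b i) w) (h1 : w ≠ D.b i)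
    (h2 : w ≠ D.par (D.b i)) : D.desc (D.v i) w := by
  have := D.desc_par_of_ne (D.desc_par_of_ne h h1.symm) h2.symm
  rwa [D.par_par] at this

theorem eq_b_of_desc_b {i : I} {x : V} (h : D.desc x (D.b i)) : x = D.b i := by
  obtain ⟨n, hn⟩ := h
  cases n with
  | zero => exact hn
  | succ n =>
    rw [Function.iterate_succ_apply'] at hn
    exact absurd hn (D.leaf i _)

end GrapeTree

/-! ### Right-angled Artin groups -/

namespace RAAG

variable {W : Type} {Λ : SimpleGraph W}

/-- The generator of the right-angled Artin group attached to a vertex. -/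
def of (Λ : SimpleGraph W) (w : W) : RAAG Λ := PresentedGroup.of w

theorem of_comm {u v : W} (h : Λ.Adj u v) : of Λ u * of Λ v = of Λ v * of Λ u := by
  have : of Λ u * of Λ v * (of Λ u)⁻¹ * (of Λ v)⁻¹ = 1 :=
    PresentedGroup.one_of_mem (rels := {r : FreeGroup W | ∃ u v : W, Λ.Adj u v ∧
      r = FreeGroup.of u * FreeGroup.of v * (FreeGroup.of u)⁻¹ * (FreeGroup.of v)⁻¹}) ⟨u, v, h, rfl⟩
  rw [mul_inv_eq_one, mul_inv_eq_iff_eq_mul] at this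
  exact this

theorem exists_lift {H : Type} [Group H] (f : W → H)
    (hf : ∀ u v, Λ.Adj u v → f u * f v = f v * f u) :
    ∃ ψ : RAAG Λ →* H, ∀ w, ψ (of Λ w) = f w := by
  refine ⟨PresentedGroup.toGroup (f := f) ?_, fun w => PresentedGroup.toGroup.of _⟩
  rintro r ⟨u, v, h, rfl⟩
  simp only [map_mul, map_inv, FreeGroup.lift_apply_of]
  rw [mul_inv_eq_one, mul_inv_eq_iff_eq_mul, hf u v h]

theorem eq_top_of_forall_of_mem (S : Subgroup (RAAG Λ)) (h : ∀ w, of Λ w ∈ S) : S = ⊤ := by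
  have := PresentedGroup.closure_range_of {r : FreeGroup W | ∃ u v : W, Λ.Adj u v ∧
      r = FreeGroup.of u * FreeGroup.of v * (FreeGroup.of u)⁻¹ * (FreeGroup.of v)⁻¹}
  rw [eq_top_iff]
  refine le_trans this.ge ?_
  refine (Subgroup.closure_le S).mpr ?_
  rintro _ ⟨w, rfl⟩
  exact h w

end RAAG

/-! ### The labelling by critical cells -/

namespace GrapeTree

variable {V : Type} [LinearOrder V] {Γ : SimpleGraph V} {I : Type} (D : GrapeTree Γ I) (c₁ : V)

/-- The generators of the right-angled Artin group. They correspond to the critical 1-cells: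
* `i` stands for the grape `i` traversed with the other particle at the root;
* `(i, c)` stands for the grape `i` traversed with the other particle at the child `c` of `v i`;
* `(c', c)`, with `c' < c` siblings, stands for the move from the parent to `c` with the other
  particle at `c'`.

The first child `c₁` of the root is excluded from the last family, as these cells are needed to
connect the critical 0-cells. -/
abbrev Gen : Type :=
  {i : I // D.v i ≠ D.r} ⊕ ({p : I × V // p.2 ≠ D.r ∧ D.par p.2 = D.v p.1} ⊕
    {p : V × V // p.1 ≠ D.r ∧ p.2 ≠ D.r ∧ D.par p.1 = D.par p.2 ∧ p.1 < p.2 ∧ p.1 ≠ c₁})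

/-- The commutation relation: a grape `j` traversed with the other particle above it commutes with
a grape `i` traversed with the other particle below it, in the branch containing `j`. -/
def genRel : D.Gen c₁ → D.Gen c₁ → Prop
  | Sum.inl j, Sum.inr (Sum.inl p) => D.desc (D.v j) p.1.2
  | _, _ => False

/-- The defining graph of the right-angled Artin group. -/
def genGraph : SimpleGraph (D.Gen c₁) := SimpleGraph.fromRel (D.genRel c₁)

/-- The generator for the grape `i` with the other particle at the root, trivial if there is no
such cell. -/
def gA (i : I) : RAAG (D.genGraph c₁) :=
  if h : D.v i ≠ D.r then RAAG.of _ (Sum.inl ⟨i, h⟩) else 1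

/-- The generator for the grape `i` with the other particle at the child `c` of `v i`. -/
def gB (i : I) (c : V) : RAAG (D.genGraph c₁) :=
  if h : c ≠ D.r ∧ D.par c = D.v i then RAAG.of _ (Sum.inr (Sum.inl ⟨(i, c), h⟩)) else 1

/-- The generator for the move to `c` with the other particle at the smaller sibling `c'`. -/
def gY (c' c : V) : RAAG (D.genGraph c₁) :=
  if h : c' ≠ D.r ∧ c ≠ D.r ∧ D.par c' = D.par c ∧ c' < c ∧ c' ≠ c₁ then
    RAAG.of _ (Sum.inr (Sum.inr ⟨(c', c), h⟩)) else 1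

/-- The label of the tree edge from `par c` to `c` with the other particle at `x`. -/
def LT (c x : V) : RAAG (D.genGraph c₁) :=
  if D.desc x (D.par c) ∧ x < c then D.gY c₁ (D.branch (D.par c) x) c else 1

/-- The label of the edge from `v i` to `b i` with the other particle at `x`. -/
def LD (i : I) (x : V) : RAAG (D.genGraph c₁) :=
  if D.desc x (D.v i) then D.gB c₁ i (D.branch (D.v i) x) else D.gA c₁ i

variable {c₁}

theorem LT_eq_one_of_lt {c x : V} (h : c < x) : D.LT c₁ c x = 1 :=
  if_neg fun h' => absurd h'.2 h.not_gt

theorem LT_eq_one_of_not_desc {c x : V} (h : ¬ D.desc x (D.par c)) : D.LT c₁ c x = 1 :=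
  if_neg fun h' => h h'.1

theorem LT_par [WellFoundedLT V] {c x : V} (h1 : D.par x ≠ D.par c)
    (h2 : D.par x ≠ c) (h3 : x ≠ D.par c) (h4 : x ≠ c) :
    D.LT c₁ c (D.par x) = D.LT c₁ c x := by
  by_cases hd : D.desc x (D.par c)
  · have hd' : D.desc (D.par x) (D.par c) := D.desc_par_of_ne hd h3
    have hlt : D.par x < c ↔ x < c := by
      refine ⟨fun h => ?_, fun h => (D.par_le x).trans_lt h⟩
      by_contra hn
      have hcx : c < x := lt_of_le_of_ne (not_lt.mp hn) h4.symm
      have := D.desc_par_of_ne (D.convex x c h hcx) h2.symm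
      exact h1 (D.desc_antisymm hd' this)
    simp only [LT, hd, hd', hlt, true_and, D.branch_par hd h3 h1]
  · have hd' : ¬ D.desc (D.par x) (D.par c) := fun h => hd (D.desc_par h)
    rw [D.LT_eq_one_of_not_desc hd, D.LT_eq_one_of_not_desc hd']

theorem LT_v {c : V} {i : I} (hc : c ≠ D.r) (h1 : c ≠ D.v i) (h2 : D.par c ≠ D.v i) :
    D.LT c₁ c (D.v i) = 1 := by
  by_cases hd : D.desc (D.v i) (D.par c)
  · exact D.LT_eq_one_of_lt (lt_of_le_of_ne (D.largest i c hc h2 hd) h1)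
  · exact D.LT_eq_one_of_not_desc hd

theorem desc_v_of_desc_b_par {c : V} {i : I} (h3 : c ≠ D.b i)
    (hd : D.desc (D.b i) (D.par c)) : D.desc (D.v i) (D.par c) :=
  D.desc_v_of_desc_b hd (D.leaf i c) fun h => h3 (D.only i c h)

theorem LT_b {c : V} {i : I} (hc : c ≠ D.r) (h2 : D.par c ≠ D.v i)
    (h3 : c ≠ D.b i) : D.LT c₁ c (D.b i) = 1 := by
  by_cases hd : D.desc (D.b i) (D.par c)
  · exact D.LT_eq_one_of_lt
      ((D.largest i c hc h2 (D.desc_v_of_desc_b_par h3 hd)).trans_lt (D.v_lt_b i))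
  · exact D.LT_eq_one_of_not_desc hd

theorem LD_par [WellFoundedLT V] {c : V} {i : I} (h1 : c ≠ D.v i) (h2 : D.par c ≠ D.v i) :
    D.LD c₁ i (D.par c) = D.LD c₁ i c := by
  by_cases hd : D.desc c (D.v i)
  · have hd' : D.desc (D.par c) (D.v i) := D.desc_par_of_ne hd h1
    simp only [LD, hd, hd', if_true, D.branch_par hd h1 h2]
  · have hd' : ¬ D.desc (D.par c) (D.v i) := fun h => hd (D.desc_par h)
    simp only [LD, hd, hd', if_false]

theorem v_ne_mid (i j : I) : D.v i ≠ D.par (D.b j) := by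
  intro h
  have : D.par (D.b i) = D.b j := D.only j _ ((D.par_par i).trans h)
  exact D.leaf j _ this

theorem desc_v_of_desc_b' {i j : I} (h : D.v i ≠ D.b j) (hd : D.desc (D.b j) (D.v i)) :
    D.desc (D.v j) (D.v i) :=
  D.desc_v_of_desc_b hd h (D.v_ne_mid i j)

theorem LD_b [WellFoundedLT V] {i j : I} (h : D.v i ≠ D.b j) (hv : D.v i ≠ D.v j) :
    D.LD c₁ i (D.b j) = D.LD c₁ i (D.v j) := by
  by_cases hd : D.desc (D.v j) (D.v i)
  · have hd' : D.desc (D.b j) (D.v i) := D.desc_trans (D.desc_b_v j) hd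
    obtain ⟨c, h1, h2, h3⟩ := D.exists_branch hd hv.symm
    simp only [LD, hd, hd', if_true, D.branch_eq h1 h2 h3,
      D.branch_eq h1 h2 (D.desc_trans (D.desc_b_v j) h3)]
  · have hd' : ¬ D.desc (D.b j) (D.v i) := fun h' => hd (D.desc_v_of_desc_b' h h')
    simp only [LD, hd, hd', if_false]

theorem LD_comm_aux [WellFoundedLT V] {i j : I} (hd : D.desc (D.v j) (D.v i))
    (hv : D.v i ≠ D.v j) :
    D.LD c₁ i (D.v j) * D.LD c₁ j (D.v i) = D.LD c₁ j (D.v i) * D.LD c₁ i (D.v j) := by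
  have hd' : ¬ D.desc (D.v i) (D.v j) := fun h => hv (D.desc_antisymm h hd)
  obtain ⟨c, h1, h2, h3⟩ := D.exists_branch hd hv.symm
  simp only [LD, hd, hd', if_true, if_false, D.branch_eq h1 h2 h3]
  unfold gA gB
  split_ifs with h4 h5
  · refine RAAG.of_comm ?_
    refine (SimpleGraph.fromRel_adj _ _ _).mpr ⟨by simp, Or.inr ?_⟩
    exact h3
  all_goals simp

theorem LD_comm [WellFoundedLT V] {i j : I} (hv : D.v i ≠ D.v j) :
    D.LD c₁ i (D.v j) * D.LD c₁ j (D.v i) = D.LD c₁ j (D.v i) * D.LD c₁ i (D.v j) := by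
  rcases D.chain i j with h | h
  · exact (D.LD_comm_aux h hv.symm).symm
  · exact D.LD_comm_aux h hv

/-- Source of the edges of `Γ`: tree edges are oriented away from the root. -/
def src : {c : V // c ≠ D.r} ⊕ I → V := Sum.elim (fun c => D.par c.1) D.v

/-- Target of the edges of `Γ`. -/
def tgt : {c : V // c ≠ D.r} ⊕ I → V := Sum.elim (fun c => c.1) D.b

/-- The labelling of all edges of `Γ`. -/
def Lab (c₁ : V) : {c : V // c ≠ D.r} ⊕ I → V → RAAG (D.genGraph c₁) :=
  Sum.elim (fun c => D.LT c₁ c.1) (D.LD c₁)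

theorem exists_edge (u u' : V) (h : Γ.Adj u u') :
    ∃ e, (D.src e = u ∧ D.tgt e = u') ∨ (D.src e = u' ∧ D.tgt e = u) := by
  rcases D.adj_cases u u' h with ⟨h1, h2⟩ | ⟨h1, h2⟩ | ⟨i, h⟩
  · exact ⟨Sum.inl ⟨u', h1⟩, Or.inl ⟨h2, rfl⟩⟩
  · exact ⟨Sum.inl ⟨u, h1⟩, Or.inr ⟨h2, rfl⟩⟩
  · exact ⟨Sum.inr i, h⟩

theorem adj_edge (e) : Γ.Adj (D.src e) (D.tgt e) := by
  rcases e with ⟨c, hc⟩ | i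
  · exact D.adj_par c hc
  · exact D.adj_grape i

theorem b_inj (hb : Function.Injective D.b) : ∀ e e', D.src e = D.src e' → D.tgt e = D.tgt e' →
    e = e' := by
  have key : ∀ i : I, D.par (D.b i) ≠ D.v i := fun i => (D.v_lt_mid i).ne'
  rintro (⟨c, hc⟩ | i) (⟨c', hc'⟩ | j) h1 h2 <;> simp only [src, tgt, Sum.elim_inl, Sum.elim_inr]
    at h1 h2
  · subst h2; rfl
  · subst h2; exact absurd h1 (key j)
  · subst h2; exact absurd h1.symm (key i)
  · rw [hb h2]

theorem edge_lt (e) : D.src e < D.tgt e := by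
  rcases e with ⟨c, hc⟩ | i
  · exact D.par_lt c hc
  · exact D.v_lt_b i

theorem Lab_sq [WellFoundedLT V] (e f) (h1 : D.src e ≠ D.src f) (h2 : D.src e ≠ D.tgt f)
    (h3 : D.tgt e ≠ D.src f) (h4 : D.tgt e ≠ D.tgt f) :
    D.Lab c₁ e (D.src f) * D.Lab c₁ f (D.tgt e) = D.Lab c₁ f (D.src e) * D.Lab c₁ e (D.tgt f) := by
  rcases e with ⟨c, hc⟩ | i <;> rcases f with ⟨d, hd⟩ | j <;>
    simp only [src, tgt, Lab, Sum.elim_inl, Sum.elim_inr] at *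
  · rw [D.LT_par h1.symm h3.symm h2.symm h4.symm, D.LT_par h1 h2 h3 h4]
    rcases lt_trichotomy c d with h | h | h
    · simp [D.LT_eq_one_of_lt h]
    · exact absurd h h4
    · simp [D.LT_eq_one_of_lt h]
  · rw [D.LT_v hc h3 h1, D.LT_b hc h1 h4, D.LD_par h3 h1, one_mul, mul_one]
  · rw [D.LT_v hd h2.symm h1.symm, D.LT_b hd h1.symm h4.symm, D.LD_par h2.symm h1.symm,
      one_mul, mul_one]
  · rw [D.LD_b h2 h1, D.LD_b h3.symm h1.symm, D.LD_comm h1]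

end GrapeTree

/-! ### Gauge fixing -/

namespace GrapeTree

variable {V : Type} [LinearOrder V] {Γ : SimpleGraph V} {I : Type} (D : GrapeTree Γ I)

/-- Functions on a rooted tree can be prescribed by their value at the root and their increments. -/
theorem exists_tree_fun [WellFoundedLT V] {H : Type} [Group H] (h₀ : H) (w : V → H) :
    ∃ f : V → H, f D.r = h₀ ∧ ∀ x, x ≠ D.r → f x = f (D.par x) * w x := by
  let F : (x : V) → ((y : V) → y < x → H) → H := fun x rec =>
    if h : x = D.r then h₀ else rec (D.par x) (D.par_lt x h) * w x
  refine ⟨WellFounded.fix (wellFounded_lt (α := V)) F, ?_, ?_⟩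
  · rw [WellFounded.fix_eq]
    simp [F]
  · intro x hx
    rw [WellFounded.fix_eq]
    simp [F, hx]

/-- A cocycle is normalized when it is trivial on a certain spanning tree of the configuration
graph: on the moves `par c → c` with the other particle at a larger vertex, on those with the
other particle at the root, and on the moves `r → c` with the other particle at `c₁`. -/
structure IsNormalized {H : Type} [Group H] (c₁ : V) (E : V → V → V → H) : Prop where
  cocycle : IsCocycle Γ E
  one_of_lt : ∀ c x, c ≠ D.r → c < x → E (D.par c) c x = 1
  one_root : ∀ c, c ≠ D.r → D.par c ≠ D.r → E (D.par c) c D.r = 1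
  one_first : ∀ c, c ≠ D.r → D.par c = D.r → c ≠ c₁ → E D.r c c₁ = 1

theorem root_lt [WellFoundedLT V] {x : V} (h : x ≠ D.r) : D.r < x :=
  lt_of_le_of_ne (D.desc_le (D.desc_root x)) h.symm

theorem par_first {c₁ : V} (h1 : c₁ ≠ D.r) (h2 : ∀ x, x ≠ D.r → c₁ ≤ x) : D.par c₁ = D.r := by
  by_contra h
  exact absurd (h2 _ h) (D.par_lt _ h1).not_ge

/-- Every cocycle is cohomologous to a normalized one. -/
theorem exists_normalized [WellFoundedLT V] {H : Type} [Group H] {c₁ : V} (h1 : c₁ ≠ D.r)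
    (h2 : ∀ x, x ≠ D.r → c₁ ≤ x) (E : V → V → V → H) (hE : IsCocycle Γ E) :
    ∃ σ : V → V → H, (∀ x y, σ x y = σ y x) ∧
      D.IsNormalized c₁ (fun u u' x => σ u x * E u u' x * (σ u' x)⁻¹) := by
  have hp := D.par_first h1 h2
  obtain ⟨g, g0, g1⟩ := D.exists_tree_fun (H := H) 1 (fun y =>
    if D.par y ≠ D.r then E (D.par y) y D.r else if y = c₁ then 1 else
      E D.r y c₁ * E c₁ D.r y)
  choose F F0 F1 using fun y => D.exists_tree_fun (g y) (fun x => E (D.par x) x y)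
  have hlt : ∀ {x y}, x < y → F (max x y) (min x y) = F y x := fun h => by
    rw [max_eq_right h.le, min_eq_left h.le]
  have hgt : ∀ {x y}, y < x → F (max x y) (min x y) = F x y := fun h => by
    rw [max_eq_left h.le, min_eq_right h.le]
  refine ⟨fun x y => F (max x y) (min x y), fun x y => by simp only [max_comm, min_comm],
    ⟨?_, ?_⟩, ?_, ?_, ?_⟩
  · intro u u' x h a b
    simp only [hE.inv u u' x h a b]
    group
  · intro u u' v v' hu hv a1 a2 a3 a4
    have := hE.sq u u' v v' hu hv a1 a2 a3 a4
    simp only [max_comm v, min_comm v, max_comm v', min_comm v', mul_assoc, inv_mul_cancel_left]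
    simp only [← mul_assoc]
    rw [mul_assoc _ (E u u' v), this]
    simp only [← mul_assoc]
  · intro c x hc hx
    simp only [hlt hx, hlt ((D.par_lt c hc).trans hx), F1 x c hc]
    group
  · intro c hc hpc
    simp only [hgt (D.root_lt hc), hgt (D.root_lt hpc), F0, g1 c hc]
    simp [hpc]
  · intro c hc hpc hne
    have hlt' : c₁ < c := lt_of_le_of_ne (h2 c hc) hne.symm
    simp only [hlt (D.root_lt h1), hgt hlt', F1 c c₁ h1, F0, hp, g1 c hc, g1 c₁ h1, g0, hpc]
    have hadj := D.adj_par c₁ h1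
    rw [hp] at hadj
    simp [hne, hE.inv D.r c₁ c hadj hc hne]

variable {D} {H : Type} [Group H] {c₁ : V} {E : V → V → V → H}

namespace IsNormalized

theorem sq_tree (hE : D.IsNormalized c₁ E)
    {c x : V} (hc : c ≠ D.r) (hx : x ≠ D.r) (h1 : D.par c ≠ D.par x)
    (h2 : D.par c ≠ x) (h3 : c ≠ D.par x) (h4 : c ≠ x) :
    E (D.par c) c (D.par x) * E (D.par x) x c = E (D.par x) x (D.par c) * E (D.par c) c x :=
  hE.cocycle.sq _ _ _ _ (D.adj_par c hc) (D.adj_par x hx) h1 h2 h3 h4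

theorem tree_not_desc [WellFoundedLT V] (hE : D.IsNormalized c₁ E)
    {c x : V} (hc : c ≠ D.r) (hd : ¬ D.desc x (D.par c)) :
    E (D.par c) c x = 1 := by
  induction x using WellFoundedLT.induction with
  | _ x ih =>
    rcases lt_trichotomy c x with h | h | h
    · exact hE.one_of_lt c x hc h
    · subst h; exact absurd (D.desc_self_par c) hd
    by_cases hx : x = D.r
    · subst hx
      refine hE.one_root c hc fun h' => hd ?_
      rw [h']; exact D.desc_refl _
    have hd' : ¬ D.desc (D.par x) (D.par c) := fun h => hd (D.desc_par h)
    have h1 : D.par c ≠ D.par x := fun h => hd' (h ▸ D.desc_refl _)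
    have h2 : D.par c ≠ x := fun h => hd (h ▸ D.desc_refl _)
    have h3 : c ≠ D.par x := (D.par_le x |>.trans_lt h).ne'
    have := hE.sq_tree hc hx h1 h2 h3 h.ne'
    rw [ih _ (D.par_lt x hx) hd', hE.one_of_lt x c hx h] at this
    have h4 : x < D.par c := by
      by_contra h5
      exact hd (D.convex c x (lt_of_le_of_ne (not_lt.mp h5) h2) h)
    rw [hE.one_of_lt x _ hx h4] at this
    simpa using this.symm

theorem tree_par [WellFoundedLT V] (hE : D.IsNormalized c₁ E)
    {c x : V} (hc : c ≠ D.r) (hx : x ≠ D.r)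
    (hd : D.desc x (D.par c)) (h : x < c) (h1 : x ≠ D.par c) (h2 : D.par x ≠ D.par c) :
    E (D.par c) c x = E (D.par c) c (D.par x) := by
  have := hE.sq_tree hc hx h2.symm h1.symm (D.par_le x |>.trans_lt h).ne' h.ne'
  have h3 : ¬ D.desc (D.par c) (D.par x) :=
    fun h' => h2 (D.desc_antisymm (D.desc_par_of_ne hd h1) h')
  rw [hE.one_of_lt x c hx h, hE.tree_not_desc hx h3] at this
  simpa using this.symm

theorem tree_branch [WellFoundedLT V] (hE : D.IsNormalized c₁ E)
    {c x : V} (hc : c ≠ D.r)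
    (hd : D.desc x (D.par c)) (h : x < c) (h1 : x ≠ D.par c) :
    E (D.par c) c x = E (D.par c) c (D.branch (D.par c) x) := by
  induction x using WellFoundedLT.induction with
  | _ x ih =>
    rcases D.desc_cases hd with h2 | ⟨hx, hd'⟩
    · exact absurd h2 h1
    by_cases hp : D.par x = D.par c
    · rw [D.branch_eq hx hp (D.desc_refl x)]
    · rw [hE.tree_par hc hx hd h h1 hp, ih _ (D.par_lt x hx) hd' (D.par_le x |>.trans_lt h) hp,
        D.branch_par hd h1 hp]

theorem grape_par [WellFoundedLT V] (hE : D.IsNormalized c₁ E)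
    {c : V} {i : I} (hc : c ≠ D.r) (h1 : c ≠ D.v i)
    (h2 : D.par c ≠ D.v i) (h3 : c ≠ D.b i) :
    E (D.v i) (D.b i) c = E (D.v i) (D.b i) (D.par c) := by
  have hv : E (D.par c) c (D.v i) = 1 := by
    by_cases hd : D.desc (D.v i) (D.par c)
    · exact hE.one_of_lt _ _ hc (lt_of_le_of_ne (D.largest i c hc h2 hd) h1)
    · exact hE.tree_not_desc hc hd
  have hb : E (D.par c) c (D.b i) = 1 := by
    by_cases hd : D.desc (D.b i) (D.par c)
    · exact hE.one_of_lt _ _ hc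
        ((D.largest i c hc h2 (D.desc_v_of_desc_b_par h3 hd)).trans_lt (D.v_lt_b i))
    · exact hE.tree_not_desc hc hd
  have := hE.cocycle.sq _ _ _ _ (D.adj_par c hc) (D.adj_grape i) h2 (D.leaf i c) h1 h3
  rw [hv, hb, one_mul, mul_one] at this
  exact this

theorem grape_root [WellFoundedLT V] (hE : D.IsNormalized c₁ E)
    {x : V} {i : I} (hd : ¬ D.desc x (D.v i)) :
    E (D.v i) (D.b i) x = E (D.v i) (D.b i) D.r := by
  induction x using WellFoundedLT.induction with
  | _ x ih =>
    by_cases hx : x = D.r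
    · rw [hx]
    have hd' : ¬ D.desc (D.par x) (D.v i) := fun h => hd (D.desc_par h)
    rw [hE.grape_par hx (fun h => hd (h ▸ D.desc_refl _)) (fun h => hd' (h ▸ D.desc_refl _))
      (fun h => hd (h ▸ D.desc_b_v i)), ih _ (D.par_lt x hx) hd']

theorem grape_branch [WellFoundedLT V] (hE : D.IsNormalized c₁ E)
    {x : V} {i : I} (hd : D.desc x (D.v i)) (h1 : x ≠ D.v i)
    (h2 : x ≠ D.b i) :
    E (D.v i) (D.b i) x = E (D.v i) (D.b i) (D.branch (D.v i) x) := by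
  induction x using WellFoundedLT.induction with
  | _ x ih =>
    rcases D.desc_cases hd with h | ⟨hx, hd'⟩
    · exact absurd h h1
    by_cases hp : D.par x = D.v i
    · rw [D.branch_eq hx hp (D.desc_refl x)]
    · rw [hE.grape_par hx h1 hp h2, ih _ (D.par_lt x hx) hd' hp (D.leaf i x),
        D.branch_par hd h1 hp]

theorem grape_comm [WellFoundedLT V] (hE : D.IsNormalized c₁ E)
    {i j : I} {c : V} (hc : c ≠ D.r) (hp : D.par c = D.v i)
    (hd : D.desc (D.v j) c) :
    E (D.v i) (D.b i) c * E (D.v j) (D.b j) D.r = E (D.v j) (D.b j) D.r * E (D.v i) (D.b i) c := by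
  have hlt : D.v i < D.v j := (hp ▸ D.par_lt c hc).trans_le (D.desc_le hd)
  have n1 : D.v i ≠ D.b j := (hlt.trans (D.v_lt_b j)).ne
  have n2 : D.b i ≠ D.v j := fun h => D.leaf i _ ((D.par_par j).trans h.symm)
  have n3 : D.b i ≠ D.b j := fun h => hlt.ne (by rw [D.v_eq i, D.v_eq j, h])
  have hdi : D.desc c (D.v i) := hp ▸ D.desc_self_par c
  have hdb : D.desc (D.b j) c := D.desc_trans (D.desc_b_v j) hd
  have hnd : ¬ D.desc (D.v i) (D.v j) := D.not_desc_of_lt hlt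
  have := hE.cocycle.sq _ _ _ _ (D.adj_grape i) (D.adj_grape j) hlt.ne n1 n2 n3
  rwa [hE.grape_branch (D.desc_trans hd hdi) hlt.ne' n2.symm, D.branch_eq hc hp hd,
    hE.grape_branch (D.desc_trans hdb hdi) n1.symm n3.symm, D.branch_eq hc hp hdb,
    hE.grape_root hnd, hE.grape_root fun h => hnd (D.desc_v_of_desc_b' n2.symm h)] at this

/-- The universal property of the labelling by critical cells. -/
theorem exists_hom [WellFoundedLT V] (hE : D.IsNormalized c₁ E)
    (h1 : c₁ ≠ D.r) (h2 : ∀ x, x ≠ D.r → c₁ ≤ x) :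
    ∃ ψ : RAAG (D.genGraph c₁) →* H,
      (∀ c x, c ≠ D.r → x ≠ D.par c → x ≠ c → ψ (D.LT c₁ c x) = E (D.par c) c x) ∧
      (∀ i x, x ≠ D.v i → x ≠ D.b i → ψ (D.LD c₁ i x) = E (D.v i) (D.b i) x) := by
  let f : D.Gen c₁ → H := Sum.elim (fun i => E (D.v i.1) (D.b i.1) D.r)
    (Sum.elim (fun p => E (D.v p.1.1) (D.b p.1.1) p.1.2)
      (fun p => E (D.par p.1.2) p.1.2 p.1.1))
  have hrel : ∀ u v, D.genRel c₁ u v → f u * f v = f v * f u := by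
    rintro (j | p | p) (j' | p' | p') h <;> simp only [genRel] at h
    exact (hE.grape_comm p'.2.1 p'.2.2 h).symm
  obtain ⟨ψ, hψ⟩ := RAAG.exists_lift (Λ := D.genGraph c₁) f (by
    intro u v h
    rcases ((SimpleGraph.fromRel_adj _ _ _).mp h).2 with h | h
    · exact hrel u v h
    · exact (hrel v u h).symm)
  refine ⟨ψ, ?_, ?_⟩
  · intro c x hc n1 n2
    unfold LT
    split_ifs with h
    · rw [hE.tree_branch hc h.1 h.2 n1]
      obtain ⟨d, d1, d2, d3⟩ := D.exists_branch h.1 n1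
      have hdc : d < c := (D.desc_le d3).trans_lt h.2
      rw [D.branch_eq d1 d2 d3]
      unfold gY
      by_cases hd : d = c₁
      · rw [dif_neg (fun h' => h'.2.2.2.2 hd), map_one]
        subst hd
        rw [D.par_first h1 h2] at d2
        rw [← d2, hE.one_first c hc d2.symm hdc.ne']
      · rw [dif_pos ⟨d1, hc, d2, hdc, hd⟩, hψ]
        rfl
    · rw [map_one]
      by_cases hd : D.desc x (D.par c)
      · exact (hE.one_of_lt c x hc (lt_of_le_of_ne (not_lt.mp fun h' => h ⟨hd, h'⟩) n2.symm)).symm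
      · exact (hE.tree_not_desc hc hd).symm
  · intro i x n1 n2
    unfold LD
    split_ifs with h
    · rw [hE.grape_branch h n1 n2]
      obtain ⟨d, d1, d2, d3⟩ := D.exists_branch h n1
      rw [D.branch_eq d1 d2 d3]
      unfold gB
      rw [dif_pos ⟨d1, d2⟩, hψ]
      rfl
    · have : D.v i ≠ D.r := fun h' => h (h' ▸ D.desc_root x)
      rw [hE.grape_root h]
      unfold gA
      rw [dif_pos this, hψ]
      rfl

end IsNormalized

variable (D)

/-- The labelling by critical cells is a universal cocycle up to coboundaries, it generates, and
the configuration graph is connected through moves with trivial label. -/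
theorem exists_universal [WellFoundedLT V] (hb : Function.Injective D.b) {c₁ : V} (h1 : c₁ ≠ D.r)
    (h2 : ∀ x, x ≠ D.r → c₁ ≤ x) :
    ∃ L : V → V → V → RAAG (D.genGraph c₁), IsCocycle Γ L ∧
      (∀ S : Subgroup (RAAG (D.genGraph c₁)),
        (∀ u u' x, Γ.Adj u u' → x ≠ u → x ≠ u' → L u u' x ∈ S) → S = ⊤) ∧
      (∀ (K : Type) (κ : V → V → K), (∀ x y, κ x y = κ y x) →
        (∀ u u' x, Γ.Adj u u' → x ≠ u → x ≠ u' → L u u' x = 1 → κ u x = κ u' x) →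
        ∀ x y x' y', x ≠ y → x' ≠ y' → κ x y = κ x' y') ∧
      (∀ (H : Type) [Group H] (E : V → V → V → H), IsCocycle Γ E →
        ∃ (σ : V → V → H) (ψ : RAAG (D.genGraph c₁) →* H), (∀ x y, σ x y = σ y x) ∧
          ∀ u u' x, Γ.Adj u u' → x ≠ u → x ≠ u' →
            ψ (L u u' x) = σ u x * E u u' x * (σ u' x)⁻¹) := by
  obtain ⟨L, hL, hLab⟩ := exists_cocycle_of_edges D.src D.tgt D.exists_edge (D.b_inj hb)
    (fun e e' a b => by
      have := D.edge_lt e; have h' := D.edge_lt e'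
      rw [a, b] at this
      exact absurd this h'.not_gt) (D.Lab c₁) D.Lab_sq
  have LTe : ∀ c (_ : c ≠ D.r) x, L (D.par c) c x = D.LT c₁ c x :=
    fun c hc x => hLab (Sum.inl ⟨c, hc⟩) x
  have LDe : ∀ i x, L (D.v i) (D.b i) x = D.LD c₁ i x := fun i x => hLab (Sum.inr i) x
  refine ⟨L, hL, ?_, ?_, ?_⟩
  · intro S hS
    refine RAAG.eq_top_of_forall_of_mem S ?_
    rintro (⟨i, hi⟩ | ⟨⟨i, c⟩, hc, hp⟩ | ⟨⟨c', c⟩, hc', hc, hp, hlt, hne⟩)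
    · have := hS _ _ D.r (D.adj_grape i) hi.symm (D.b_ne i).symm
      have hn : ¬ D.desc D.r (D.v i) := D.not_desc_of_lt (D.root_lt hi)
      rw [LDe, LD, if_neg hn, gA, dif_pos hi] at this
      exact this
    · dsimp only at hc hp
      have n1 : c ≠ D.v i := (hp ▸ D.par_lt c hc).ne'
      have n2 : c ≠ D.b i := fun h => (D.v_lt_mid i).ne (by rw [← h, hp])
      have := hS _ _ c (D.adj_grape i) n1 n2
      rw [LDe, LD, if_pos (hp ▸ D.desc_self_par c), D.branch_eq hc hp (D.desc_refl c), gB,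
        dif_pos ⟨hc, hp⟩] at this
      exact this
    · dsimp only at hc hc' hp hlt hne
      have n1 : c' ≠ D.par c := (hp ▸ D.par_lt c' hc').ne'
      have := hS _ _ c' (D.adj_par c hc) n1 hlt.ne
      rw [LTe c hc, LT, if_pos ⟨hp ▸ D.desc_self_par c', hlt⟩,
        D.branch_eq hc' hp (D.desc_refl c'), gY, dif_pos ⟨hc', hc, hp, hlt, hne⟩] at this
      exact this
  · intro K κ hs hκ
    have hstep : ∀ c x, c ≠ D.r → x ≠ D.par c → x ≠ c → D.LT c₁ c x = 1 →
        κ (D.par c) x = κ c x := fun c x hc n1 n2 h =>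
      hκ _ _ _ (D.adj_par c hc) n1 n2 ((LTe c hc x).trans h)
    have hroot : ∀ y, y ≠ D.r → κ D.r y = κ D.r c₁ := by
      intro y
      induction y using WellFoundedLT.induction with
      | _ y ih =>
        intro hy
        by_cases hp : D.par y = D.r
        · by_cases hyc : y = c₁
          · rw [hyc]
          have hlt : c₁ < y := lt_of_le_of_ne (h2 y hy) (Ne.symm hyc)
          have hp1 := D.par_first h1 h2
          have e1 := hstep c₁ y h1 (by rw [hp1]; exact hy) hyc (D.LT_eq_one_of_lt hlt)
          have e2 := hstep y c₁ hy (by rw [hp]; exact h1) (Ne.symm hyc) (by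
            rw [LT, if_pos ⟨hp ▸ D.desc_root c₁, hlt⟩,
              D.branch_eq h1 (hp1.trans hp.symm) (D.desc_refl _), gY,
              dif_neg fun h => h.2.2.2.2 rfl])
          rw [hp1] at e1
          rw [hp] at e2
          rw [e1, hs, e2]
        · have e := hstep y D.r hy (Ne.symm hp) hy.symm
            (D.LT_eq_one_of_not_desc (D.not_desc_of_lt (D.root_lt hp)))
          rw [hs, ← e, hs, ih _ (D.par_lt y hy) hp]
    have hlt : ∀ x y, x < y → κ x y = κ D.r c₁ := by
      intro x
      induction x using WellFoundedLT.induction with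
      | _ x ih =>
        intro y hxy
        by_cases hx : x = D.r
        · subst hx; exact hroot y hxy.ne'
        · have hl := D.par_lt x hx
          rw [← hstep x y hx (hl.trans hxy).ne' hxy.ne' (D.LT_eq_one_of_lt hxy)]
          exact ih _ hl y (hl.trans hxy)
    have hall : ∀ x y, x ≠ y → κ x y = κ D.r c₁ := by
      intro x y hne
      rcases lt_or_gt_of_ne hne with h | h
      · exact hlt x y h
      · rw [hs]; exact hlt y x h
    intro x y x' y' h h'
    rw [hall x y h, hall x' y' h']
  · intro H _ E hE
    obtain ⟨σ, hσ, hN⟩ := D.exists_normalized h1 h2 E hE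
    obtain ⟨ψ, hT, hD⟩ := hN.exists_hom h1 h2
    refine ⟨σ, ψ, hσ, ?_⟩
    have key : ∀ e x, x ≠ D.src e → x ≠ D.tgt e →
        ψ (L (D.src e) (D.tgt e) x) =
          σ (D.src e) x * E (D.src e) (D.tgt e) x * (σ (D.tgt e) x)⁻¹ := by
      rintro (⟨c, hc⟩ | i) x n1 n2
      · rw [hLab]; exact hT c x hc n1 n2
      · rw [hLab]; exact hD i x n1 n2
    intro u u' x hadj n1 n2
    obtain ⟨e, (⟨rfl, rfl⟩ | ⟨rfl, rfl⟩)⟩ := D.exists_edge u u' hadj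
    · exact key e x n1 n2
    · rw [hL.inv _ _ x hadj.symm n2 n1, map_inv, key e x n2 n1,
        hE.inv _ _ x hadj.symm n2 n1]
      group

end GrapeTree

/-! ### Depth-first orders on rooted trees -/

theorem list_lt_concat (l : List ℕ) (k : ℕ) : l < l ++ [k] := by
  induction l with
  | nil => simp
  | cons a l ih => simpa [List.cons_lt_cons_iff] using ih

theorem list_le_append (l t : List ℕ) : l ≤ l ++ t := by
  induction t using List.reverseRecOn with
  | nil => simp
  | append_singleton t k ih =>
    rw [← List.append_assoc]
    exact ih.trans (list_lt_concat _ _).le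

theorem list_prefix_of_between {l m : List ℕ} {k : ℕ} (h1 : l < m) (h2 : m < l ++ [k]) :
    l <+: m := by
  induction l generalizing m with
  | nil => exact ⟨m, rfl⟩
  | cons a l ih =>
    cases m with
    | nil => simp at h1
    | cons b m =>
      rw [List.cons_append, List.cons_lt_cons_iff] at h2
      rw [List.cons_lt_cons_iff] at h1
      rcases h1 with h1 | ⟨rfl, h1⟩
      · rcases h2 with h2 | ⟨rfl, h2⟩ <;> omega
      · rcases h2 with h2 | ⟨_, h2⟩
        · omega
        · rw [List.cons_prefix_cons]
          exact ⟨rfl, ih h1 h2⟩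

theorem list_append_lt {l m m' : List ℕ} {k k' : ℕ} (h : k < k') :
    l ++ k :: m < l ++ k' :: m' := by
  induction l with
  | nil => simp [List.cons_lt_cons_iff, h]
  | cons a l ih => simpa [List.cons_lt_cons_iff] using ih

theorem exists_child {V : Type} {par : V → V} {r : V} (hr : par r = r) {w : V} (n : ℕ) (z : V)
    (h : par^[n] z = w) :
    z = w ∨ ∃ y, y ≠ r ∧ par y = w ∧ ∃ m, par^[m] z = y := by
  induction n generalizing z with
  | zero => exact Or.inl h
  | succ n ih =>
    rw [Function.iterate_succ_apply] at h
    by_cases hz : z = r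
    · subst hz
      rw [hr] at h
      exact ih z h
    rcases ih _ h with h' | ⟨y, h1, h2, m, h3⟩
    · exact Or.inr ⟨z, hz, h', 0, rfl⟩
    · exact Or.inr ⟨y, h1, h2, m + 1, by rwa [Function.iterate_succ_apply]⟩

/-- A finite rooted tree has a depth-first order in which the branches meeting a given chain of
vertices come last among their siblings: order the vertices lexicographically by the
list of keys of the vertices on the path from the root, for a suitable injective `key`. -/
theorem exists_order {V : Type} [Finite V] {I : Type} (par : V → V) (r : V) (d : V → ℕ) (v : I → V)
    (hr : par r = r) (hd : ∀ x, x ≠ r → d (par x) < d x)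
    (chain : ∀ i j, (∃ n, par^[n] (v i) = v j) ∨ (∃ n, par^[n] (v j) = v i)) :
    ∃ _ : LinearOrder V, (∀ x, x ≠ r → par x < x) ∧
      (∀ c x, par c < x → x < c → ∃ n, par^[n] x = par c) ∧
      (∀ i x, x ≠ r → par x ≠ v i → (∃ n, par^[n] (v i) = par x) → x ≤ v i) := by
  obtain ⟨N, ⟨e⟩⟩ := Finite.exists_equiv_fin V
  let key : V → ℕ := fun x => (e x : ℕ) + if ∃ i n, par^[n] (v i) = x then N else 0
  have key_inj : ∀ x y, key x = key y → x = y := by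
    intro x y h
    have hx := (e x).2
    have hy := (e y).2
    apply e.injective
    apply Fin.ext
    simp only [key] at h
    split_ifs at h <;> omega
  have key_lt : ∀ x y, (¬ ∃ i n, par^[n] (v i) = x) → (∃ i n, par^[n] (v i) = y) →
      key x < key y := by
    intro x y h1 h2
    have hx := (e x).2
    simp only [key, if_neg h1, if_pos h2]
    omega
  let F : (x : V) → ((y : V) → (measure d).rel y x → List ℕ) → List ℕ := fun x rec =>
    if h : x = r then [] else rec (par x) (hd x h) ++ [key x]
  let addr : V → List ℕ := WellFounded.fix (measure d).wf F
  have a0 : addr r = [] := by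
    simp only [addr]
    rw [WellFounded.fix_eq]
    simp [F]
  have a1 : ∀ x, x ≠ r → addr x = addr (par x) ++ [key x] := by
    intro x hx
    simp only [addr]
    rw [WellFounded.fix_eq]
    simp [F, hx]
  have addr_inj : Function.Injective addr := by
    intro x y h
    by_cases hx : x = r <;> by_cases hy : y = r
    · rw [hx, hy]
    · rw [hx, a0, a1 y hy] at h; simp at h
    · rw [hy, a0, a1 x hx] at h; simp at h
    · rw [a1 x hx, a1 y hy] at h
      have := List.append_inj_right' h rfl
      exact key_inj _ _ (by simpa using this)
  have pre : ∀ n x, addr (par^[n] x) <+: addr x := by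
    intro n
    induction n with
    | zero => intro x; exact List.prefix_refl _
    | succ n ih =>
      intro x
      rw [Function.iterate_succ_apply]
      by_cases hx : x = r
      · subst hx
        have := ih (par x)
        rwa [hr] at this ⊢
      · refine (ih _).trans ?_
        rw [a1 x hx]
        exact List.prefix_append _ _
  have desc_of_pre : ∀ w k x, d x ≤ k → addr w <+: addr x → ∃ n, par^[n] x = w := by
    intro w k
    induction k with
    | zero =>
      intro x hk h
      by_cases hx : x = r
      · subst hx
        rw [a0, List.prefix_nil] at h
        exact ⟨0, addr_inj (by rw [h]; exact a0)⟩
      · have := hd x hx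
        omega
    | succ k ih =>
      intro x hk h
      by_cases hx : x = r
      · subst hx
        rw [a0, List.prefix_nil] at h
        exact ⟨0, addr_inj (by rw [h]; exact a0)⟩
      · rw [a1 x hx, List.prefix_concat_iff] at h
        rcases h with h | h
        · exact ⟨0, addr_inj (by rw [h, Function.iterate_zero, id, a1 x hx])⟩
        · have h' := hd x hx
          obtain ⟨n, hn⟩ := ih (par x) (by omega) h
          exact ⟨n + 1, by rwa [Function.iterate_succ_apply]⟩
  refine ⟨LinearOrder.lift' addr addr_inj, ?_, ?_, ?_⟩
  · intro x hx
    change addr (par x) < addr x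
    rw [a1 x hx]
    exact list_lt_concat _ _
  · intro c x h1 h2
    change addr (par c) < addr x at h1
    change addr x < addr c at h2
    have hc : c ≠ r := by
      rintro rfl
      rw [hr] at h1
      exact lt_asymm h1 h2
    rw [a1 c hc] at h2
    exact desc_of_pre _ _ x le_rfl (list_prefix_of_between h1 h2)
  · rintro i x hx hne ⟨n, hn⟩
    change addr x ≤ addr (v i)
    rcases exists_child hr n _ hn with h | ⟨y, hy, hyp, m, hm⟩
    · exact absurd h.symm hne
    obtain ⟨t, ht⟩ := pre m (v i)
    rw [hm] at ht
    by_cases hxy : x = y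
    · subst hxy
      rw [← ht]
      exact list_le_append _ _
    · have hnx : ¬ ∃ i n, par^[n] (v i) = x := by
        rintro ⟨j, k, hj⟩
        -- two different children of the same vertex cannot both lie on the chain
        have key2 : ∀ z, addr x <+: addr z → addr y <+: addr z → False := by
          intro z h1 h2
          rw [a1 x hx] at h1
          rw [a1 y hy, hyp] at h2
          have := (List.prefix_of_prefix_length_le h1 h2 (by simp)).eq_of_length (by simp)
          have := List.append_inj_right' this rfl
          exact hxy (key_inj _ _ (by simpa using this))
        rcases chain i j with ⟨q, hq⟩ | ⟨q, hq⟩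
        · refine key2 (v i) ?_ ⟨t, ht⟩
          rw [← hj]
          refine (pre k _).trans ?_
          rw [← hq]
          exact pre q _
        · refine key2 (v j) (hj ▸ pre k _) ?_
          refine List.IsPrefix.trans ⟨t, ht⟩ ?_
          rw [← hq]
          exact pre q _
      have hk := key_lt x y hnx ⟨i, m, hm⟩
      rw [← ht, a1 y hy, hyp, a1 x hx, List.append_assoc]
      exact (list_append_lt hk).le

/-! ### The rooted spanning tree of a bunch of grapes -/

/-- The parent function of a tree rooted at `a`, together with a depth function. -/
theorem exists_parent {VT : Type} (T : SimpleGraph VT) (hT : T.IsTree) (a : VT) :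
    ∃ (par : VT → VT) (d : VT → ℕ), par a = a ∧
      (∀ u, u ≠ a → T.Adj (par u) u ∧ d (par u) < d u) ∧
      (∀ u w, T.Adj u w → (w ≠ a ∧ par w = u) ∨ (u ≠ a ∧ par u = w)) := by
  choose P hP hP' using hT.existsUnique_path a
  have hPa : P a = SimpleGraph.Walk.nil := by
    have := hP' a SimpleGraph.Walk.nil
    exact (this (by simp)).symm
  refine ⟨fun u => (P u).penultimate, fun u => (P u).length, by simp [hPa], ?_, ?_⟩
  · intro u hu
    have hnil : ¬ (P u).Nil := SimpleGraph.Walk.not_nil_of_ne hu.symm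
    have hadj := (P u).adj_penultimate hnil
    refine ⟨hadj, ?_⟩
    have := hT.isAcyclic.path_concat (hP _) (hP u) hadj (by simp)
    have := congrArg SimpleGraph.Walk.length this
    rw [SimpleGraph.Walk.length_concat] at this
    exact (Nat.lt_succ_self _).trans_eq this.symm
  · have key : ∀ u w, T.Adj u w → u ∈ (P w).support → w ≠ a ∧ (P w).penultimate = u := by
      intro u w h hs
      refine ⟨?_, (hT.isAcyclic.eq_penultimate_of_adj_end (hP w) h.symm hs).symm⟩
      rintro rfl
      rw [hPa, SimpleGraph.Walk.support_nil, List.mem_singleton] at hs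
      exact h.ne hs
    intro u w h
    by_cases hs : u ∈ (P w).support
    · exact Or.inl (key u w h hs)
    · exact Or.inr (key w u h.symm
        (hT.isAcyclic.mem_support_of_ne_mem_support_of_adj_of_isPath (hP u) (hP w) h hs))

/-- Along a path starting at the root, parents are predecessors. -/
theorem parent_getVert {VT : Type} {T : SimpleGraph VT} {a b : VT} {par : VT → VT}
    (hadj : ∀ u w, T.Adj u w → (w ≠ a ∧ par w = u) ∨ (u ≠ a ∧ par u = w))
    (p : T.Walk a b) (hp : p.IsPath) (k : ℕ) (hk : k < p.length) :
    par (p.getVert (k + 1)) = p.getVert k := by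
  induction k with
  | zero =>
    rcases hadj _ _ (p.adj_getVert_succ hk) with h | h
    · exact h.2
    · simp at h
  | succ k ih =>
    have hk' : k < p.length := by omega
    rcases hadj _ _ (p.adj_getVert_succ hk) with h | h
    · exact h.2
    · have h2 := (ih hk').symm.trans h.2
      have := hp.getVert_injOn (by simp; omega) (by simp; omega) h2
      omega

theorem iterate_parent_getVert {VT : Type} {T : SimpleGraph VT} {a b : VT} {par : VT → VT}
    (hadj : ∀ u w, T.Adj u w → (w ≠ a ∧ par w = u) ∨ (u ≠ a ∧ par u = w))
    (p : T.Walk a b) (hp : p.IsPath) (n k : ℕ) (hk : n + k ≤ p.length) :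
    par^[n] (p.getVert (n + k)) = p.getVert k := by
  induction n with
  | zero => simp
  | succ n ih =>
    rw [Function.iterate_succ_apply, show n + 1 + k = (n + k) + 1 by omega,
      parent_getVert hadj p hp _ (by omega), ih (by omega)]

/-- The parent function on a bunch of grapes: the stem is rooted by `par`, and each grape is the
path from its stem vertex through the vertex `0` to the vertex `1`. -/
def grapePar {VT : Type} {ℓ : VT → ℕ} (par : VT → VT) : GrapeVert VT ℓ → GrapeVert VT ℓ :=
  Sum.elim (fun u => Sum.inl (par u))
    (fun q => if q.2.2 = 0 then Sum.inl q.1 else Sum.inr ⟨q.1, (q.2.1, 0)⟩)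

/-- A bunch of grapes whose grapes lie along a path has a `GrapeTree` structure. -/
theorem exists_grapeTree {VT : Type} [Fintype VT] [DecidableEq VT] (T : SimpleGraph VT)
    (ℓ : VT → ℕ) (hT : T.IsTree)
    (hpath : ∃ (a b : VT) (p : T.Walk a b), p.IsPath ∧ ∀ v : VT, 1 ≤ ℓ v → v ∈ p.support) :
    ∃ (_ : LinearOrder (GrapeVert VT ℓ)) (D : GrapeTree (bunchOfGrapes T ℓ) (Σ v : VT, Fin (ℓ v))),
      Function.Injective D.b := by
  obtain ⟨a, b, p, hp, hsupp⟩ := hpath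
  obtain ⟨par, d, ha, hpar, hadj⟩ := exists_parent T hT a
  let r : GrapeVert VT ℓ := Sum.inl a
  let vv : (Σ v : VT, Fin (ℓ v)) → GrapeVert VT ℓ := fun i => Sum.inl i.1
  let bb : (Σ v : VT, Fin (ℓ v)) → GrapeVert VT ℓ := fun i => Sum.inr ⟨i.1, (i.2, 1)⟩
  let dd : GrapeVert VT ℓ → ℕ := Sum.elim d (fun q => d q.1 + 1 + (q.2.2 : ℕ))
  have hiter : ∀ n u, (grapePar par)^[n] (Sum.inl u : GrapeVert VT ℓ) = Sum.inl (par^[n] u) := by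
    intro n
    induction n with
    | zero => intro u; rfl
    | succ n ih => intro u; exact ih (par u)
  have hpr : grapePar (ℓ := ℓ) par r = r := congrArg Sum.inl ha
  have hdd : ∀ x, x ≠ r → dd (grapePar par x) < dd x := by
    rintro (u | ⟨u, i, j⟩) hx
    · exact (hpar u fun h => hx (congrArg Sum.inl h)).2
    · by_cases hj : j = 0
      · subst hj
        exact Nat.lt_succ_self (d u)
      · obtain rfl : j = 1 := by omega
        exact Nat.lt_succ_self (d u + 1)
  have hchain : ∀ i j, (∃ n, (grapePar par)^[n] (vv i) = vv j) ∨
      (∃ n, (grapePar par)^[n] (vv j) = vv i) := by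
    have key : ∀ i : (Σ v : VT, Fin (ℓ v)), ∃ m ≤ p.length, p.getVert m = i.1 := by
      rintro ⟨u, i⟩
      obtain ⟨m, h1, h2⟩ := SimpleGraph.Walk.mem_support_iff_exists_getVert.mp
        (hsupp u (by have := i.2; omega))
      exact ⟨m, h2, h1⟩
    have key2 : ∀ i j : (Σ v : VT, Fin (ℓ v)), ∀ m n, m ≤ p.length → p.getVert m = i.1 →
        p.getVert n = j.1 → n ≤ m → ∃ n, (grapePar par)^[n] (vv i) = vv j := by
      intro i j m n hm h1 h2 hnm
      refine ⟨m - n, ?_⟩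
      have := iterate_parent_getVert hadj p hp (m - n) n (by omega)
      rw [Nat.sub_add_cancel hnm, h1, h2] at this
      simp only [vv]
      rw [hiter, this]
    intro i j
    obtain ⟨m, hm, h1⟩ := key i
    obtain ⟨n, hn, h2⟩ := key j
    rcases le_total n m with h | h
    · exact Or.inl (key2 i j m n hm h1 h2 h)
    · exact Or.inr (key2 j i n m hn h2 h1 h)
  obtain ⟨ord, o1, o2, o3⟩ := exists_order (grapePar par) r dd vv hpr hdd hchain
  have hne1 : ∀ (u : VT) (q), (Sum.inl u : GrapeVert VT ℓ) ≠ Sum.inr q := fun u q h => by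
    cases h
  refine ⟨ord, ⟨r, grapePar par, vv, bb, hpr, o1, ?_, ?_, ?_, o2, ?_, ?_, ?_, ?_, hchain, o3⟩, ?_⟩
  · rintro (u | ⟨u, i, j⟩) hx
    · have hu : u ≠ a := fun h => hx (congrArg Sum.inl h)
      refine (SimpleGraph.fromEdgeSet_adj _).mpr
        ⟨Or.inl (Or.inl ⟨par u, u, (hpar u hu).1, rfl⟩), ?_⟩
      exact fun h => (hpar u hu).1.ne (Sum.inl_injective h)
    · by_cases hj : j = 0
      · subst hj
        exact (SimpleGraph.fromEdgeSet_adj _).mpr ⟨Or.inl (Or.inr ⟨u, i, 0, rfl⟩), hne1 _ _⟩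
      · obtain rfl : j = 1 := by omega
        refine (SimpleGraph.fromEdgeSet_adj _).mpr ⟨Or.inr ⟨u, i, rfl⟩, ?_⟩
        intro h
        simp [grapePar] at h
        have := Sum.inr_injective h
        simp at this
  · rintro ⟨u, i⟩
    exact (SimpleGraph.fromEdgeSet_adj _).mpr ⟨Or.inl (Or.inr ⟨u, i, 1, rfl⟩), hne1 _ _⟩
  · intro x y h
    obtain ⟨h, hne⟩ := (SimpleGraph.fromEdgeSet_adj _).mp h
    have ne_r : ∀ q, (Sum.inr q : GrapeVert VT ℓ) ≠ r := fun q h => hne1 _ _ h.symm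
    rcases h with (⟨u, w, huw, h⟩ | ⟨u, i, j, h⟩) | ⟨u, i, h⟩
    · have key : ∀ u w, T.Adj u w → ((Sum.inl w : GrapeVert VT ℓ) ≠ r ∧
          grapePar par (Sum.inl w : GrapeVert VT ℓ) = Sum.inl u) ∨
          ((Sum.inl u : GrapeVert VT ℓ) ≠ r ∧
          grapePar par (Sum.inl u : GrapeVert VT ℓ) = Sum.inl w) := by
        intro u w h
        rcases hadj u w h with h | h
        · exact Or.inl ⟨fun h' => h.1 (Sum.inl_injective h'), congrArg Sum.inl h.2⟩
        · exact Or.inr ⟨fun h' => h.1 (Sum.inl_injective h'), congrArg Sum.inl h.2⟩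
      rcases Sym2.eq_iff.mp h with ⟨rfl, rfl⟩ | ⟨rfl, rfl⟩
      · rcases key u w huw with h | h
        · exact Or.inl h
        · exact Or.inr (Or.inl h)
      · rcases key w u huw.symm with h | h
        · exact Or.inl h
        · exact Or.inr (Or.inl h)
    · by_cases hj : j = 0
      · subst hj
        rcases Sym2.eq_iff.mp h with ⟨rfl, rfl⟩ | ⟨rfl, rfl⟩
        · exact Or.inl ⟨ne_r _, rfl⟩
        · exact Or.inr (Or.inl ⟨ne_r _, rfl⟩)
      · obtain rfl : j = 1 := by omega
        rcases Sym2.eq_iff.mp h with ⟨rfl, rfl⟩ | ⟨rfl, rfl⟩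
        · exact Or.inr (Or.inr ⟨⟨u, i⟩, Or.inl ⟨rfl, rfl⟩⟩)
        · exact Or.inr (Or.inr ⟨⟨u, i⟩, Or.inr ⟨rfl, rfl⟩⟩)
    · rcases Sym2.eq_iff.mp h with ⟨rfl, rfl⟩ | ⟨rfl, rfl⟩
      · exact Or.inl ⟨ne_r _, rfl⟩
      · exact Or.inr (Or.inl ⟨ne_r _, rfl⟩)
  · rintro ⟨u, i⟩ h
    exact hne1 _ _ h.symm
  · rintro ⟨u, i⟩
    rfl
  · rintro ⟨u, i⟩ (w | ⟨w, k, j⟩) h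
    · exact hne1 _ _ h
    · by_cases hj : j = 0
      · subst hj
        exact hne1 _ _ h
      · obtain rfl : j = 1 := by omega
        have := Sum.inr_injective h
        simp at this
        obtain ⟨rfl, h⟩ := this
        simp at h
  · rintro ⟨u, i⟩ (w | ⟨w, k, j⟩) h
    · exact absurd h (hne1 _ _)
    · by_cases hj : j = 0
      · subst hj
        exact absurd h (hne1 _ _)
      · obtain rfl : j = 1 := by omega
        have := Sum.inr_injective h
        simp at this
        obtain ⟨rfl, h⟩ := this
        simp at h
        subst h
        rfl
  · rintro ⟨u, i⟩ ⟨w, j⟩ h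
    have := Sum.inr_injective h
    simp at this
    obtain ⟨rfl, h⟩ := this
    simp at h
    subst h
    rfl

/-! ### Paths, open covers and monodromy -/

section Monodromy

open Topology unitInterval

variable {X : Type} [TopologicalSpace X]

/-- A property of path classes that is stable under concatenation and holds for paths inside
the members of an open cover holds for all path classes. -/
theorem path_induction {ι : Type} {U : ι → Set X} (hU : ∀ i, IsOpen (U i))
    (hc : ∀ x, ∃ i, x ∈ U i) (P : ∀ x y : X, Path.Homotopic.Quotient x y → Prop)
    (htr : ∀ x y z (a : Path.Homotopic.Quotient x y) (b : Path.Homotopic.Quotient y z),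
      P x y a → P y z b → P x z (a.trans b))
    (hloc : ∀ i x y (γ : Path x y), (∀ t, γ t ∈ U i) → P x y (.mk γ)) :
    ∀ x y a, P x y a := by
  intro x y a
  obtain ⟨γ⟩ := a
  obtain ⟨t, ht0, hmono, ⟨n, hn⟩, hcov⟩ :=
    exists_monotone_Icc_subset_open_cover_unitInterval (c := fun i => γ ⁻¹' (U i))
      (fun i => (hU i).preimage γ.continuous)
      (fun s _ => by
        obtain ⟨i, hi⟩ := hc (γ s)
        exact Set.mem_iUnion.2 ⟨i, hi⟩)
  have key : ∀ m, P _ _ (.mk (γ.subpath (t 0) (t m))) := by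
    intro m
    induction m with
    | zero =>
      rw [Path.subpath_self]
      obtain ⟨i, hi⟩ := hc (γ (t 0))
      exact hloc i _ _ _ (fun _ => hi)
    | succ m ih =>
      have h2 : P _ _ (.mk (γ.subpath (t m) (t (m + 1)))) := by
        obtain ⟨i, hi⟩ := hcov m
        refine hloc i _ _ _ fun s => ?_
        have h3 : γ.subpath (t m) (t (m + 1)) s ∈ Set.range (γ.subpath (t m) (t (m + 1))) :=
          ⟨s, rfl⟩
        rw [Path.range_subpath_of_le _ _ _ (hmono (Nat.le_succ m))] at h3
        obtain ⟨s', hs', h4⟩ := h3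
        rw [← h4]
        exact hi hs'
      have h3 := htr _ _ _ _ _ ih h2
      have h4 : Path.Homotopic.Quotient.mk (γ.subpath (t 0) (t (m + 1))) =
          Path.Homotopic.Quotient.trans (.mk (γ.subpath (t 0) (t m)))
            (.mk (γ.subpath (t m) (t (m + 1)))) := by
        rw [← Path.Homotopic.Quotient.mk_trans]
        exact Path.Homotopic.Quotient.eq.2
          ⟨(Path.Homotopy.subpathTransSubpath γ (t 0) (t m) (t (m + 1))).symm⟩
      rw [h4]
      exact h3
  have h1 := key n
  rw [ht0, hn n le_rfl, Path.subpath_zero_one] at h1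
  have hcast : ∀ (x' y' : X) (hx : x' = x) (hy : y' = y),
      P x' y' (.mk (γ.cast hx hy)) → P x y (.mk γ) := by
    rintro _ _ rfl rfl h
    exact h
  exact hcast _ _ _ _ h1

/-- The flat principal bundle glued from a locally constant cocycle `g` on an open cover. -/
def cocycleCore {G : Type} [Group G] [TopologicalSpace G] [DiscreteTopology G] {ι : Type}
    (U : ι → Set X) (hU : ∀ i, IsOpen (U i))
    (idx : X → ι) (hidx : ∀ x, x ∈ U (idx x)) (g : ι → ι → X → G)
    (hloc : ∀ i j x, x ∈ U i → x ∈ U j → ∀ᶠ y in 𝓝 x, g i j y = g i j x)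
    (hself : ∀ i x, x ∈ U i → g i i x = 1)
    (hcomp : ∀ i j k x, x ∈ U i → x ∈ U j → x ∈ U k → g i j x * g j k x = g i k x) :
    FiberBundleCore ι X G where
  baseSet := U
  isOpen_baseSet := hU
  indexAt := idx
  mem_baseSet_at := hidx
  coordChange i j x h := h * g i j x
  coordChange_self i x hx v := by simp [hself i x hx]
  continuousOn_coordChange i j := by
    rintro ⟨x, h⟩ ⟨⟨hi, hj⟩, -⟩
    refine ContinuousAt.continuousWithinAt ?_
    refine ContinuousAt.mul continuousAt_snd ?_
    have h1 : ∀ᶠ y in 𝓝 (x, h), g i j y.1 = g i j x :=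
      (continuousAt_fst (p := (x, h))).eventually (hloc i j x hi hj)
    exact (continuousAt_const (y := g i j x)).congr (h1.mono fun _ hy => hy.symm)
  coordChange_comp i j k x hx v := by
    rw [mul_assoc, hcomp i j k x hx.1.1 hx.1.2 hx.2]

/-- The holonomy of a locally constant cocycle along path classes: it is multiplicative, and
inside a member of the cover it is read off from the cocycle at the two end points. -/
theorem exists_holonomy {G : Type} [Group G] {ι : Type}
    {U : ι → Set X} (hU : ∀ i, IsOpen (U i))
    (idx : X → ι) (hidx : ∀ x, x ∈ U (idx x)) (g : ι → ι → X → G)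
    (hloc : ∀ i j x, x ∈ U i → x ∈ U j → ∀ᶠ y in 𝓝 x, g i j y = g i j x)
    (hself : ∀ i x, x ∈ U i → g i i x = 1)
    (hcomp : ∀ i j k x, x ∈ U i → x ∈ U j → x ∈ U k → g i j x * g j k x = g i k x) :
    ∃ Φ : ∀ x y : X, Path.Homotopic.Quotient x y → G,
      (∀ x y z (a : Path.Homotopic.Quotient x y) (b : Path.Homotopic.Quotient y z),
        Φ x z (a.trans b) = Φ x y a * Φ y z b) ∧
      ∀ i x y (γ : Path x y), (∀ t, γ t ∈ U i) →
        Φ x y (.mk γ) = g (idx x) i x * g i (idx y) y := by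
  let _ : TopologicalSpace G := ⊥
  have _ : DiscreteTopology G := ⟨rfl⟩
  let Z := cocycleCore U hU idx hidx g hloc hself hcomp
  have cov : IsCoveringMap Z.proj := FiberBundle.isCoveringMap (F := G) (E := Z.Fiber)
  let pt : ∀ (x : X) (_ : G), Z.proj ⁻¹' {x} := fun x h =>
    ⟨(⟨x, h⟩ : Bundle.TotalSpace G Z.Fiber), rfl⟩
  let val : Bundle.TotalSpace G Z.Fiber → G := fun e => e.2
  have pt_val : ∀ y (e : Z.proj ⁻¹' {y}), pt y (val e.1) = e := by
    rintro y ⟨⟨e1, e2⟩, h1⟩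
    obtain rfl : e1 = y := h1
    rfl
  let m : ∀ x y : X, Path.Homotopic.Quotient x y → G → G := fun x y a h =>
    val (cov.monodromy a (pt x h)).1
  have hm : ∀ x y a h, cov.monodromy a (pt x h) = pt y (m x y a h) := fun x y a h =>
    (pt_val _ _).symm
  have mtr : ∀ x y z (a : Path.Homotopic.Quotient x y) (b : Path.Homotopic.Quotient y z) h,
      m x z (a.trans b) h = m y z b (m x y a h) := by
    intro x y z a b h
    change val (cov.monodromy (a.trans b) (pt x h)).1 = _
    rw [cov.monodromy_trans_apply, hm]
  have mloc : ∀ i x y (γ : Path x y), (∀ t, γ t ∈ U i) → ∀ h,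
      m x y (.mk γ) h = h * (g (idx x) i x * g i (idx y) y) := by
    intro i x y γ hγ h
    have hx : x ∈ U i := by simpa using hγ 0
    have hy : y ∈ U i := by simpa using hγ 1
    let Γ : I → Bundle.TotalSpace G Z.Fiber := fun t =>
      (Z.localTriv i).toOpenPartialHomeomorph.symm (γ t, h * g (idx x) i x)
    have hΓ : ∀ t, Γ t = ⟨γ t, h * g (idx x) i x * g i (idx (γ t)) (γ t)⟩ := by
      intro t
      exact Z.localTriv_symm_apply i _
    have hΓc : Continuous Γ := by
      refine (Z.localTriv i).toOpenPartialHomeomorph.continuousOn_symm.comp_continuous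
        (by fun_prop) ?_
      intro t
      exact (Z.mem_localTriv_target i _).2 (hγ t)
    have hΓ0 : Γ 0 = ⟨x, h⟩ := by
      rw [hΓ, γ.source, mul_assoc, hcomp _ _ _ _ (hidx x) hx (hidx x), hself _ _ (hidx x), mul_one]
    have h1 : Γ = cov.liftPath (γ : C(I, X)) (⟨x, h⟩ : Bundle.TotalSpace G Z.Fiber) γ.source := by
      rw [cov.eq_liftPath_iff]
      refine ⟨hΓc, ?_, hΓ0⟩
      funext t
      change Z.proj (Γ t) = γ t
      rw [hΓ]
    have h2 : (cov.monodromy (.mk γ) (pt x h)).1 = Γ 1 := by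
      rw [h1]; rfl
    have h3 : m x y (.mk γ) h = val (Γ 1) := congrArg val h2
    rw [h3, hΓ, γ.target, ← mul_assoc]
  have meq : ∀ x y a, ∀ h, m x y a h = h * m x y a 1 := by
    refine path_induction hU (fun x => ⟨idx x, hidx x⟩) _ ?_ ?_
    · intro x y z a b ha hb h
      rw [mtr, hb, ha, mtr, hb (m x y a 1), mul_assoc]
    · intro i x y γ hγ h
      rw [mloc i x y γ hγ, mloc i x y γ hγ, one_mul]
  refine ⟨fun x y a => m x y a 1, ?_, ?_⟩
  · intro x y z a b
    change m x z (a.trans b) 1 = _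
    rw [mtr, meq]
  · intro i x y γ hγ
    change m x y (.mk γ) 1 = _
    rw [mloc i x y γ hγ, one_mul]

end Monodromy

/-! ### Comparing a cocycle with the fundamental group -/

section Bracket

open Topology CategoryTheory

variable {X : Type} [TopologicalSpace X]

/-- The loop at `x₀` obtained from the path class `a` by adding the chosen paths `T`
from `x₀` to its end points.  The opposite group is used because multiplication in
`FundamentalGroup` is composition of arrows, i.e. concatenation in the reverse order. -/
def bracket {x₀ : X} (T : ∀ x, Path.Homotopic.Quotient x₀ x) {x y : X}
    (a : Path.Homotopic.Quotient x y) : (FundamentalGroup X x₀)ᵐᵒᵖ :=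
  .op (FundamentalGroup.fromPath (((T x).trans a).trans (T y).symm))

theorem quot_trans_assoc {x y z w : X} (a : Path.Homotopic.Quotient x y)
    (b : Path.Homotopic.Quotient y z) (c : Path.Homotopic.Quotient z w) :
    (a.trans b).trans c = a.trans (b.trans c) :=
  Category.assoc (obj := FundamentalGroupoid X) (W := ⟨x⟩) (X := ⟨y⟩) (Y := ⟨z⟩) (Z := ⟨w⟩) a b c

theorem quot_symm_trans {x y : X} (a : Path.Homotopic.Quotient x y) :
    a.symm.trans a = .refl y :=
  Groupoid.inv_comp (obj := FundamentalGroupoid X) (X := ⟨x⟩) (Y := ⟨y⟩) a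

theorem quot_trans_symm {x y : X} (a : Path.Homotopic.Quotient x y) :
    a.trans a.symm = .refl x :=
  Groupoid.comp_inv (obj := FundamentalGroupoid X) (X := ⟨x⟩) (Y := ⟨y⟩) a

theorem quot_refl_trans {x y : X} (a : Path.Homotopic.Quotient x y) :
    (Path.Homotopic.Quotient.refl x).trans a = a :=
  Category.id_comp (obj := FundamentalGroupoid X) (X := ⟨x⟩) (Y := ⟨y⟩) a

theorem quot_trans_refl {x y : X} (a : Path.Homotopic.Quotient x y) :
    a.trans (.refl y) = a :=
  Category.comp_id (obj := FundamentalGroupoid X) (X := ⟨x⟩) (Y := ⟨y⟩) a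

theorem bracket_trans {x₀ : X} (T : ∀ x, Path.Homotopic.Quotient x₀ x) {x y z : X}
    (a : Path.Homotopic.Quotient x y) (b : Path.Homotopic.Quotient y z) :
    bracket T (a.trans b) = bracket T a * bracket T b := by
  unfold bracket
  rw [← MulOpposite.op_mul]
  congr 1
  rw [FundamentalGroup.mul_def]
  change ((T x).trans (a.trans b)).trans (T z).symm =
    (((T x).trans a).trans (T y).symm).trans (((T y).trans b).trans (T z).symm)
  simp only [quot_trans_assoc]
  rw [← quot_trans_assoc (T y).symm (T y), quot_symm_trans, quot_refl_trans]

/-- Everything needed to compare `π₁` with a group `G` carrying a locally constant cocycle `g`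
on a cover by simply connected open sets `U i` with base points `b i`.  The hypothesis `hC1`
expresses simple connectivity, `C i z` being the class of a path in `U i` from `z` to `b i`. -/
theorem exists_compare {G : Type} [Group G] {ι : Type}
    {U : ι → Set X} (hU : ∀ i, IsOpen (U i))
    (idx : X → ι) (hidx : ∀ x, x ∈ U (idx x)) (g : ι → ι → X → G)
    (hloc : ∀ i j x, x ∈ U i → x ∈ U j → ∀ᶠ y in 𝓝 x, g i j y = g i j x)
    (hself : ∀ i x, x ∈ U i → g i i x = 1)
    (hcomp : ∀ i j k x, x ∈ U i → x ∈ U j → x ∈ U k → g i j x * g j k x = g i k x)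
    {x₀ : X} (T : ∀ x, Path.Homotopic.Quotient x₀ x) (b : ι → X)
    (C : ι → X → (FundamentalGroup X x₀)ᵐᵒᵖ)
    (hC1 : ∀ i x y (γ : Path x y), (∀ t, γ t ∈ U i) →
      bracket T (.mk γ) = C i x * (C i y)⁻¹)
    (hC2 : ∀ i z, z ∈ U i → ∃ γ : Path z (b i), (∀ t, γ t ∈ U i) ∧ C i z = bracket T (.mk γ)) :
    ∃ (φ : (FundamentalGroup X x₀)ᵐᵒᵖ →* G) (ρ : ι → G),
      (∀ i j z, z ∈ U i → z ∈ U j → φ ((C i z)⁻¹ * C j z) = ρ i * g i j z * (ρ j)⁻¹) ∧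
      (∀ i j, b i ∈ U i → b i ∈ U j → b i = b j → g i j (b i) = 1 → ρ i = ρ j) ∧
      ∀ (ψ : G →* (FundamentalGroup X x₀)ᵐᵒᵖ) (σ : ι → (FundamentalGroup X x₀)ᵐᵒᵖ),
        (∀ i j z, z ∈ U i → z ∈ U j →
          ψ (g i j z) = σ i * (C i z)⁻¹ * C j z * (σ j)⁻¹) →
        ∃ k, ∀ h, ψ (φ h) = k * h * k⁻¹ := by
  obtain ⟨Φ, hΦ, hΦl⟩ := exists_holonomy hU idx hidx g hloc hself hcomp
  have hΦ1 : ∀ x, Φ x x (.refl x) = 1 := by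
    intro x
    have h := hΦ x x x (.refl x) (.refl x)
    rw [quot_refl_trans] at h
    exact left_eq_mul.1 h
  have hΦs : ∀ x y (a : Path.Homotopic.Quotient x y), Φ y x a.symm = (Φ x y a)⁻¹ := by
    intro x y a
    have h := hΦ x y x a a.symm
    rw [quot_trans_symm, hΦ1] at h
    exact (inv_eq_of_mul_eq_one_right h.symm).symm
  let φ : (FundamentalGroup X x₀)ᵐᵒᵖ →* G :=
    { toFun := fun h => Φ x₀ x₀ (FundamentalGroup.toPath h.unop)
      map_one' := hΦ1 x₀
      map_mul' := fun h h' => hΦ x₀ x₀ x₀ _ _ }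
  have hφ : ∀ x y (a : Path.Homotopic.Quotient x y),
      φ (bracket T a) = Φ _ _ (T x) * Φ _ _ a * (Φ _ _ (T y))⁻¹ := by
    intro x y a
    change Φ x₀ x₀ (((T x).trans a).trans (T y).symm) = _
    rw [hΦ, hΦ, hΦs]
  refine ⟨φ, fun i => Φ _ _ (T (b i)) * (g i (idx (b i)) (b i))⁻¹, ?_, ?_, ?_⟩
  · intro i j z hi hj
    have hz : ∀ i, z ∈ U i → φ (C i z) = Φ _ _ (T z) * (g (idx z) i z * g i (idx (b i)) (b i)) *
        (Φ _ _ (T (b i)))⁻¹ := by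
      intro i hi
      obtain ⟨γ, hγ, h⟩ := hC2 i z hi
      rw [h, hφ, hΦl i _ _ γ hγ]
    rw [map_mul, map_inv, hz i hi, hz j hj, ← hcomp (idx z) i j z (hidx z) hi hj]
    group
  · intro i j hi hj hb h1
    have h2 := hcomp i j (idx (b i)) (b i) hi hj (hidx _)
    rw [h1, one_mul] at h2
    dsimp only
    rw [← h2, hb]
  · intro ψ σ hψ
    let S : X → (FundamentalGroup X x₀)ᵐᵒᵖ := fun z => σ (idx z) * (C (idx z) z)⁻¹
    have key : ∀ x y (a : Path.Homotopic.Quotient x y),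
        ψ (Φ x y a) = S x * bracket T a * (S y)⁻¹ := by
      refine path_induction hU (fun x => ⟨idx x, hidx x⟩) _ ?_ ?_
      · intro x y z a b ha hb
        rw [hΦ, map_mul, ha, hb, bracket_trans]
        group
      · intro i x y γ hγ
        have hx : x ∈ U i := by simpa using hγ 0
        have hy : y ∈ U i := by simpa using hγ 1
        rw [hΦl i x y γ hγ, map_mul, hψ _ _ _ (hidx x) hx, hψ _ _ _ hy (hidx y), hC1 i x y γ hγ]
        simp only [S]
        group
    let t : (FundamentalGroup X x₀)ᵐᵒᵖ := .op (FundamentalGroup.fromPath (T x₀))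
    have ht : ∀ h : (FundamentalGroup X x₀)ᵐᵒᵖ,
        bracket T (FundamentalGroup.toPath h.unop) = t * h * t⁻¹ := fun h => rfl
    refine ⟨S x₀ * t, fun h => ?_⟩
    change ψ (Φ x₀ x₀ (FundamentalGroup.toPath h.unop)) = _
    rw [key, ht]
    group

end Bracket

/-! ### Classes of straight paths -/

section Lines

open Topology unitInterval

variable {X Y H : Type} [TopologicalSpace X] [TopologicalSpace Y] [AddCommGroup Y] [Module ℝ Y]
  [ContinuousAdd Y] [ContinuousSMul ℝ Y] [Group H]

/-- The value under `hl` of the image in `X` of the straight path from `a` to `b`; it is `1`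
when this straight path leaves `D`. -/
def br {D : Set Y} {q : Y → X} (hq : ContinuousOn q D)
    (hl : ∀ x y : X, Path.Homotopic.Quotient x y → H) (a b : Y) : H :=
  if h : segment ℝ a b ⊆ D then
    hl _ _ (.mk ((Path.segment a b).map' (f := q)
      (hq.mono (by rw [Path.range_segment]; exact h))))
  else 1

variable {D : Set Y} {q : Y → X}

theorem hl_congr {H : Type} (hl : ∀ x y : X, Path.Homotopic.Quotient x y → H)
    {x y x' y' : X} (γ : Path x y) (γ' : Path x' y') (h : ∀ t, γ t = γ' t) :
    hl _ _ (.mk γ) = hl _ _ (.mk γ') := by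
  obtain rfl : x = x' := by simpa using h 0
  obtain rfl : y = y' := by simpa using h 1
  obtain rfl : γ = γ' := Path.ext (funext h)
  rfl

theorem br_eq_of_path (hq : ContinuousOn q D)
    (hl : ∀ x y : X, Path.Homotopic.Quotient x y → H)
    {a b : Y} (h : segment ℝ a b ⊆ D) {x y : X} (γ : Path x y)
    (hγ : ∀ t, γ t = q (Path.segment a b t)) : br hq hl a b = hl _ _ (.mk γ) := by
  rw [br, dif_pos h]
  exact hl_congr hl _ _ fun t => (hγ t).symm

/-- Two paths in a star convex subset of `D` with the same end points have the same image
class. -/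
theorem mk_map_eq_of_star (hq : ContinuousOn q D) {S : Set Y} {s₀ : Y}
    (hS : StarConvex ℝ s₀ S) (hSD : S ⊆ D)
    {a b : Y} (α β : Path a b) (hα : ∀ t, α t ∈ S) (hβ : ∀ t, β t ∈ S)
    (h1 : ContinuousOn q (Set.range α)) (h2 : ContinuousOn q (Set.range β)) :
    Path.Homotopic.Quotient.mk (α.map' h1) = Path.Homotopic.Quotient.mk (β.map' h2) := by
  have ha : a ∈ S := by simpa using hα 0
  have hb : b ∈ S := by simpa using hα 1
  have hc : ContractibleSpace S := hS.contractibleSpace ⟨a, ha⟩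
  let α' : Path (⟨a, ha⟩ : S) ⟨b, hb⟩ :=
    ⟨⟨fun t => ⟨α t, hα t⟩, by fun_prop⟩, by simp, by simp⟩
  let β' : Path (⟨a, ha⟩ : S) ⟨b, hb⟩ :=
    ⟨⟨fun t => ⟨β t, hβ t⟩, by fun_prop⟩, by simp, by simp⟩
  have h3 : α'.Homotopic β' := SimplyConnectedSpace.paths_homotopic _ _
  exact Path.Homotopic.Quotient.eq.2
    (h3.map (⟨fun s : S => q s, continuousOn_iff_continuous_domRestrict.1 (hq.mono hSD)⟩ : C(S, X)))

theorem hl_path_mul (hq : ContinuousOn q D)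
    (hl : ∀ x y : X, Path.Homotopic.Quotient x y → H)
    (htr : ∀ x y z (a : Path.Homotopic.Quotient x y) (b : Path.Homotopic.Quotient y z),
      hl x z (a.trans b) = hl x y a * hl y z b)
    {S : Set Y} {s₀ : Y} (hS : StarConvex ℝ s₀ S) (hSD : S ⊆ D)
    {a b c : Y} (α : Path a b) (hα : ∀ t, α t ∈ S) (hbc : segment ℝ b c ⊆ S)
    (hac : segment ℝ a c ⊆ S) {x y : X} (γ : Path x y) (hγ : ∀ t, γ t = q (α t)) :
    hl _ _ (.mk γ) * br hq hl b c = br hq hl a c := by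
  have hb : ∀ t, Path.segment b c t ∈ S := fun t => hbc (by
    rw [← Path.range_segment]; exact ⟨t, rfl⟩)
  have hc : ∀ t, Path.segment a c t ∈ S := fun t => hac (by
    rw [← Path.range_segment]; exact ⟨t, rfl⟩)
  have hab : ∀ t, α.trans (Path.segment b c) t ∈ S := by
    intro t
    have h1 : α.trans (Path.segment b c) t ∈ Set.range (α.trans (Path.segment b c)) := ⟨t, rfl⟩
    rw [Path.trans_range] at h1
    rcases h1 with ⟨s, hs⟩ | ⟨s, hs⟩
    · rw [← hs]; exact hα s
    · rw [← hs]; exact hb s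
  have cont : ∀ {a b : Y} (α : Path a b), (∀ t, α t ∈ S) → ContinuousOn q (Set.range α) := by
    intro a b α hα
    refine hq.mono ?_
    rintro _ ⟨t, rfl⟩
    exact hSD (hα t)
  have h0 := mk_map_eq_of_star hq hS hSD _ _ hab hc (cont _ hab) (cont _ hc)
  rw [br_eq_of_path hq hl (hac.trans hSD) ((Path.segment a c).map' (cont _ hc)) fun t => rfl, ← h0,
    br_eq_of_path hq hl (hbc.trans hSD) ((Path.segment b c).map' (cont _ hb)) fun t => rfl,
    hl_congr hl γ (α.map' (cont _ hα)) hγ, ← htr, ← Path.Homotopic.Quotient.mk_trans]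
  congr 2
  ext t
  change _ = q (α.trans (Path.segment b c) t)
  simp only [Path.trans_apply]
  split_ifs <;> rfl

theorem br_mul (hq : ContinuousOn q D)
    (hl : ∀ x y : X, Path.Homotopic.Quotient x y → H)
    (htr : ∀ x y z (a : Path.Homotopic.Quotient x y) (b : Path.Homotopic.Quotient y z),
      hl x z (a.trans b) = hl x y a * hl y z b)
    {S : Set Y} (hS : Convex ℝ S) (hSD : S ⊆ D) {a b c : Y} (ha : a ∈ S) (hb : b ∈ S)
    (hc : c ∈ S) : br hq hl a b * br hq hl b c = br hq hl a c := by
  have hab : ∀ t, Path.segment a b t ∈ S := fun t => hS.segment_subset ha hb (by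
    rw [← Path.range_segment]; exact ⟨t, rfl⟩)
  have hcont : ContinuousOn q (Set.range (Path.segment a b)) := by
    refine hq.mono ?_
    rintro _ ⟨t, rfl⟩
    exact hSD (hab t)
  rw [br_eq_of_path hq hl ((hS.segment_subset ha hb).trans hSD) ((Path.segment a b).map' hcont)
    fun t => rfl]
  exact hl_path_mul hq hl htr (hS.starConvex ha) hSD _ hab (hS.segment_subset hb hc)
    (hS.segment_subset ha hc) _ fun t => rfl

theorem br_self (hq : ContinuousOn q D)
    (hl : ∀ x y : X, Path.Homotopic.Quotient x y → H)
    (htr : ∀ x y z (a : Path.Homotopic.Quotient x y) (b : Path.Homotopic.Quotient y z),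
      hl x z (a.trans b) = hl x y a * hl y z b)
    {a : Y} (ha : a ∈ D) : br hq hl a a = 1 := by
  have h := br_mul hq hl htr (convex_singleton a) (Set.singleton_subset_iff.2 ha)
    (Set.mem_singleton a) (Set.mem_singleton a) (Set.mem_singleton a)
  exact mul_eq_left.1 h

theorem br_symm_map (hq : ContinuousOn q D)
    (hl : ∀ x y : X, Path.Homotopic.Quotient x y → H)
    (τ : Y →ₗ[ℝ] Y) (hτ : ∀ a, τ (τ a) = a) (hqτ : ∀ a, q (τ a) = q a)
    (hDτ : ∀ a ∈ D, τ a ∈ D) (a b : Y) : br hq hl (τ a) (τ b) = br hq hl a b := by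
  have himg : ∀ a b : Y, segment ℝ a b ⊆ D → segment ℝ (τ a) (τ b) ⊆ D := by
    intro a b h
    have h2 := image_segment ℝ τ.toAffineMap a b
    change _ = segment ℝ (τ a) (τ b) at h2
    rw [← h2]
    rintro _ ⟨x, hx, rfl⟩
    exact hDτ _ (h hx)
  have hseg : ∀ t, Path.segment (τ a) (τ b) t = τ (Path.segment a b t) := by
    intro t
    exact (AffineMap.apply_lineMap τ.toAffineMap a b (t : ℝ)).symm
  by_cases h : segment ℝ a b ⊆ D
  · rw [br_eq_of_path hq hl (himg _ _ h) ((Path.segment a b).map' (hq.mono (by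
      rw [Path.range_segment]; exact h))) fun t => by rw [hseg, hqτ]; rfl, br, dif_pos h]
  · have h' : ¬ segment ℝ (τ a) (τ b) ⊆ D := fun h2 => h (by
      have := himg _ _ h2
      rwa [hτ, hτ] at this)
    rw [br, br, dif_neg h, dif_neg h']

end Lines

/-! ### Geometry of pairs of points of a graph -/

section Geometry

set_option linter.unusedSectionVars false

variable {V : Type} [Fintype V] [DecidableEq V] {Γ : SimpleGraph V}

theorem mem_realization {x : V → ℝ} :
    x ∈ realization Γ ↔ ∃ a b, Γ.Adj a b ∧ x ∈ segment ℝ (basisVec a) (basisVec b) := by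
  simp [realization]

theorem basisVec_self (v : V) : basisVec v v = 1 := by simp [basisVec]

theorem basisVec_ne {v w : V} (h : w ≠ v) : basisVec v w = 0 := by simp [basisVec, h]

theorem basisVec_nonneg (v w : V) : 0 ≤ basisVec v w := by
  unfold basisVec; split_ifs <;> norm_num

theorem basisVec_le_one (v w : V) : basisVec v w ≤ 1 := by
  unfold basisVec; split_ifs <;> norm_num

theorem sum_basisVec (v : V) : ∑ w, basisVec v w = 1 := by simp [basisVec]

theorem segment_facts {a b : V} {x : V → ℝ} (h : x ∈ segment ℝ (basisVec a) (basisVec b)) :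
    (∀ w, 0 ≤ x w) ∧ (∀ w, x w ≤ 1) ∧ (∑ w, x w = 1) ∧ ∀ w, w ≠ a → w ≠ b → x w = 0 := by
  obtain ⟨s, t, hs, ht, hst, rfl⟩ := h
  refine ⟨fun w => ?_, fun w => ?_, ?_, fun w h1 h2 => ?_⟩
  · have h1 := basisVec_nonneg a w
    have h2 := basisVec_nonneg b w
    simp only [Pi.add_apply, Pi.smul_apply, smul_eq_mul]
    positivity
  · have h1 := basisVec_le_one a w
    have h2 := basisVec_le_one b w
    simp only [Pi.add_apply, Pi.smul_apply, smul_eq_mul]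
    nlinarith
  · simp only [Pi.add_apply, Pi.smul_apply, smul_eq_mul]
    rw [Finset.sum_add_distrib, ← Finset.mul_sum, ← Finset.mul_sum, sum_basisVec, sum_basisVec]
    linarith
  · simp [basisVec_ne h1, basisVec_ne h2]

theorem realization_facts {x : V → ℝ} (h : x ∈ realization Γ) :
    (∀ w, 0 ≤ x w) ∧ (∀ w, x w ≤ 1) ∧ ∑ w, x w = 1 := by
  obtain ⟨a, b, -, hx⟩ := mem_realization.1 h
  exact ⟨(segment_facts hx).1, (segment_facts hx).2.1, (segment_facts hx).2.2.1⟩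

/-- The ordered configurations of two points of `|Γ|`, as a subset of a vector space. -/
def confSet (Γ : SimpleGraph V) : Set ((V → ℝ) × (V → ℝ)) :=
  {p | p.1 ∈ realization Γ ∧ p.2 ∈ realization Γ ∧ p.1 ≠ p.2}

/-- The configurations whose first point has the larger `u`-coordinate and whose second
point has the larger `v`-coordinate; the open star of the vertex `(u, v)`. -/
def starSet (Γ : SimpleGraph V) (i : V × V) : Set ((V → ℝ) × (V → ℝ)) :=
  {p | p ∈ confSet Γ ∧ p.2 i.1 < p.1 i.1 ∧ p.1 i.2 < p.2 i.2}

/-- The pair of vertices `(e_u, e_v)` as a point of the ambient vector space. -/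
def vtx (i : V × V) : (V → ℝ) × (V → ℝ) := (basisVec i.1, basisVec i.2)

theorem swap_mem_confSet {p : (V → ℝ) × (V → ℝ)} (h : p ∈ confSet Γ) : p.swap ∈ confSet Γ :=
  ⟨h.2.1, h.1, fun e => h.2.2 e.symm⟩

theorem swap_mem_starSet {i : V × V} {p : (V → ℝ) × (V → ℝ)} (h : p ∈ starSet Γ i) :
    p.swap ∈ starSet Γ i.swap :=
  ⟨swap_mem_confSet h.1, h.2.2, h.2.1⟩

theorem exists_mem_starSet {p : (V → ℝ) × (V → ℝ)} (h : p ∈ confSet Γ) :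
    ∃ i, p ∈ starSet Γ i := by
  have aux : ∀ x y : V → ℝ, x ∈ realization Γ → y ∈ realization Γ → x ≠ y → ∃ u, y u < x u := by
    intro x y hx hy hne
    by_contra hcon
    push Not at hcon
    apply hne
    have h1 : ∑ w, x w = ∑ w, y w := by
      rw [(realization_facts hx).2.2, (realization_facts hy).2.2]
    funext w
    exact (Finset.sum_eq_sum_iff_of_le fun w _ => hcon w).1 h1 w (Finset.mem_univ w)
  obtain ⟨u, hu⟩ := aux _ _ h.1 h.2.1 h.2.2
  obtain ⟨v, hv⟩ := aux _ _ h.2.1 h.1 h.2.2.symm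
  exact ⟨(u, v), h, hu, hv⟩

theorem starSet_ne {i : V × V} {p : (V → ℝ) × (V → ℝ)} (h : p ∈ starSet Γ i) : i.1 ≠ i.2 := by
  intro e
  have h1 := h.2.1
  have h2 := h.2.2
  rw [e] at h1
  exact lt_asymm h1 h2

/-- All vertices at which one point dominates another point lie on a single edge. -/
theorem exists_edge {x y : V → ℝ} (hx : x ∈ realization Γ) (hy : y ∈ realization Γ) :
    ∃ a b, Γ.Adj a b ∧ x ∈ segment ℝ (basisVec a) (basisVec b) ∧
      ∀ u, y u < x u → u = a ∨ u = b := by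
  obtain ⟨a, b, hab, h⟩ := mem_realization.1 hx
  refine ⟨a, b, hab, h, fun u hu => ?_⟩
  by_contra hcon
  push Not at hcon
  have h1 := (segment_facts h).2.2.2 u hcon.1 hcon.2
  have h2 := (realization_facts hy).1 u
  linarith

theorem segment_subset_realization {a b : V} (h : Γ.Adj a b) :
    segment ℝ (basisVec a) (basisVec b) ⊆ realization Γ :=
  fun _ hx => mem_realization.2 ⟨a, b, h, hx⟩

theorem basisVec_mem_segment {a b u : V} (h : u = a ∨ u = b) :
    basisVec u ∈ segment ℝ (basisVec a) (basisVec b) := by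
  rcases h with rfl | rfl
  · exact left_mem_segment ℝ _ _
  · exact right_mem_segment ℝ _ _

/-- A convex set containing one point and the vertices `u`, `u'`, on which the functional
`p ↦ p u + p u'` is bounded below. -/
theorem exists_convex_side {x y : V → ℝ} (hx : x ∈ realization Γ) (hy : y ∈ realization Γ)
    {u u' : V} (hu : y u < x u) (hu' : y u' < x u') :
    ∃ A : Set (V → ℝ), Convex ℝ A ∧ A ⊆ realization Γ ∧ x ∈ A ∧ basisVec u ∈ A ∧
      basisVec u' ∈ A ∧ (∀ p ∈ A, x u + x u' ≤ p u + p u') ∧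
      ∀ w, x w < y w → ∀ p ∈ A, p w ≤ x w := by
  obtain ⟨a, b, hab, h, hd⟩ := exists_edge hx hy
  have f := segment_facts h
  refine ⟨segment ℝ (basisVec a) (basisVec b) ∩
    ({p | x u + x u' ≤ p u + p u'} ∩ {p | ∀ w, x w < y w → p w ≤ x w}), ?_, ?_, ?_, ?_, ?_, ?_, ?_⟩
  · refine (convex_segment _ _).inter (Convex.inter ?_ ?_)
    · intro p hp q hq s t hs ht hst
      simp only [Set.mem_ofPred_eq, Pi.add_apply, Pi.smul_apply, smul_eq_mul] at *
      have : x u + x u' = s * (x u + x u') + t * (x u + x u') := by rw [← add_mul, hst, one_mul]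
      nlinarith [mul_le_mul_of_nonneg_left hp hs, mul_le_mul_of_nonneg_left hq ht]
    · intro p hp q hq s t hs ht hst w hw
      have hp := hp w hw
      have hq := hq w hw
      simp only [Pi.add_apply, Pi.smul_apply, smul_eq_mul] at *
      have : x w = s * x w + t * x w := by rw [← add_mul, hst, one_mul]
      nlinarith [mul_le_mul_of_nonneg_left hp hs, mul_le_mul_of_nonneg_left hq ht]
  · exact fun p hp => segment_subset_realization hab hp.1
  · exact ⟨h, by simp, fun w _ => le_refl _⟩
  · refine ⟨basisVec_mem_segment (hd u hu), ?_, fun w hw => ?_⟩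
    · by_cases e : u' = u
      · subst e
        have := f.2.1 u'
        simp only [Set.mem_ofPred_eq, basisVec_self]; linarith
      · have h1 : x u + x u' ≤ ∑ w, x w := by
          rw [← Finset.sum_pair (f := x) (Ne.symm e)]
          exact Finset.sum_le_univ_sum_of_nonneg f.1
        simp only [Set.mem_ofPred_eq, basisVec_self, basisVec_ne e]; linarith [f.2.2.1]
    · rw [basisVec_ne (by rintro rfl; exact lt_asymm hu hw)]
      exact f.1 w
  · refine ⟨basisVec_mem_segment (hd u' hu'), ?_, fun w hw => ?_⟩
    · by_cases e : u = u'
      · subst e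
        have := f.2.1 u
        simp only [Set.mem_ofPred_eq, basisVec_self]; linarith
      · have h1 : x u + x u' ≤ ∑ w, x w := by
          rw [← Finset.sum_pair (f := x) e]
          exact Finset.sum_le_univ_sum_of_nonneg f.1
        simp only [Set.mem_ofPred_eq, basisVec_self, basisVec_ne e]; linarith [f.2.2.1]
    · rw [basisVec_ne (by rintro rfl; exact lt_asymm hu' hw)]
      exact f.1 w
  · exact fun p hp => hp.2.1
  · exact fun w hw p hp => hp.2.2 w hw

/-- A configuration in the stars of `(u, v)` and `(u', v')` lies in a convex set of
configurations which contains all four pairs made of `u` or `u'` and `v` or `v'`. -/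
theorem exists_convex_cell {i j : V × V} {p : (V → ℝ) × (V → ℝ)} (hi : p ∈ starSet Γ i)
    (hj : p ∈ starSet Γ j) :
    ∃ S, Convex ℝ S ∧ S ⊆ confSet Γ ∧ p ∈ S ∧ vtx i ∈ S ∧ vtx j ∈ S ∧
      vtx (i.1, j.2) ∈ S ∧ vtx (j.1, i.2) ∈ S := by
  obtain ⟨⟨hx, hy, hne⟩, hi1, hi2⟩ := hi
  obtain ⟨-, hj1, hj2⟩ := hj
  obtain ⟨A, hA, hAr, hxA, hA1, hA2, hA3, -⟩ := exists_convex_side hx hy hi1 hj1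
  obtain ⟨B, hB, hBr, hyB, hB1, hB2, -, hB4⟩ := exists_convex_side hy hx hi2 hj2
  refine ⟨A ×ˢ B, hA.prod hB, ?_, ⟨hxA, hyB⟩, ⟨hA1, hB1⟩, ⟨hA2, hB2⟩, ⟨hA1, hB2⟩, ⟨hA2, hB1⟩⟩
  rintro ⟨a, b⟩ ⟨ha, hb⟩
  refine ⟨hAr ha, hBr hb, ?_⟩
  rintro (rfl : a = b)
  have h1 := hA3 a ha
  have h2 := hB4 i.1 hi1 a hb
  have h3 := hB4 j.1 hj1 a hb
  linarith

theorem vtx_mem_confSet {i : V × V} {p : (V → ℝ) × (V → ℝ)} (hi : p ∈ starSet Γ i) :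
    vtx i ∈ confSet Γ := by
  obtain ⟨S, -, h, -, h1, -⟩ := exists_convex_cell hi hi
  exact h h1

theorem vtx_mem_starSet {i : V × V} (hi : vtx i ∈ confSet Γ) : vtx i ∈ starSet Γ i := by
  have hne : i.1 ≠ i.2 := by
    intro e
    apply hi.2.2
    simp [vtx, e]
  refine ⟨hi, ?_, ?_⟩
  · simp [vtx, basisVec_self, basisVec_ne hne]
  · simp [vtx, basisVec_self, basisVec_ne hne.symm]

theorem starConvex_starSet (i : V × V) : StarConvex ℝ (vtx i) (starSet Γ i) := by
  intro p hp s t hs ht hst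
  obtain ⟨S, hS, hSc, hpS, hvS, -⟩ := exists_convex_cell hp hp
  have hne := starSet_ne hp
  refine ⟨hSc (hS hvS hpS hs ht hst), ?_, ?_⟩
  · have h1 := hp.2.1
    simp only [vtx, Prod.snd_add, Prod.smul_snd, Prod.fst_add, Prod.smul_fst, Pi.add_apply,
      Pi.smul_apply, smul_eq_mul, basisVec_self, basisVec_ne hne]
    rcases eq_or_lt_of_le ht with h | h
    · subst h; linarith
    · nlinarith
  · have h1 := hp.2.2
    simp only [vtx, Prod.snd_add, Prod.smul_snd, Prod.fst_add, Prod.smul_fst, Pi.add_apply,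
      Pi.smul_apply, smul_eq_mul, basisVec_self, basisVec_ne hne.symm]
    rcases eq_or_lt_of_le ht with h | h
    · subst h; linarith
    · nlinarith

/-- For edges or vertices `{u, u'}` and `{v, v'}` without common vertex, the configuration of
their midpoints lies in the stars of all their corners. -/
theorem exists_center {u u' v v' : V} (hu : u = u' ∨ Γ.Adj u u') (hv : v = v' ∨ Γ.Adj v v')
    (hu0 : basisVec u ∈ realization Γ) (hv0 : basisVec v ∈ realization Γ)
    (h1 : u ≠ v) (h2 : u ≠ v') (h3 : u' ≠ v) (h4 : u' ≠ v') :
    ∃ p, p ∈ starSet Γ (u, v) ∧ p ∈ starSet Γ (u', v) ∧ p ∈ starSet Γ (u, v') ∧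
      p ∈ starSet Γ (u', v') := by
  have aux : ∀ u u' : V, (u = u' ∨ Γ.Adj u u') → basisVec u ∈ realization Γ →
      ∃ x ∈ realization Γ, 0 < x u ∧ 0 < x u' ∧ ∀ w, w ≠ u → w ≠ u' → x w = 0 := by
    rintro u u' (rfl | h) h0
    · refine ⟨_, h0, ?_, ?_, fun w h _ => basisVec_ne h⟩ <;> rw [basisVec_self] <;> norm_num
    · have hm : (2⁻¹ : ℝ) • basisVec u + (2⁻¹ : ℝ) • basisVec u' ∈
          segment ℝ (basisVec u) (basisVec u') :=
        ⟨2⁻¹, 2⁻¹, by norm_num, by norm_num, by norm_num, rfl⟩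
      refine ⟨_, segment_subset_realization h hm, ?_, ?_, (segment_facts hm).2.2.2⟩
      · simp [basisVec_self, basisVec_ne h.ne]
      · simp [basisVec_self, basisVec_ne h.ne.symm]
  obtain ⟨x, hx, hx1, hx2, hx3⟩ := aux u u' hu hu0
  obtain ⟨y, hy, hy1, hy2, hy3⟩ := aux v v' hv hv0
  have e1 := hx3 v h1.symm h3.symm
  have e2 := hx3 v' h2.symm h4.symm
  have e3 := hy3 u h1 h2
  have e4 := hy3 u' h3 h4
  have hc : (x, y) ∈ confSet Γ := ⟨hx, hy, fun e => by
    have : x u = y u := congrFun e u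
    linarith⟩
  refine ⟨(x, y), ⟨hc, ?_, ?_⟩, ⟨hc, ?_, ?_⟩, ⟨hc, ?_, ?_⟩, ⟨hc, ?_, ?_⟩⟩ <;>
    dsimp only <;> linarith

end Geometry

/-! ### The unordered configuration space as a quotient -/

section Quotient

open Topology

set_option linter.unusedSectionVars false

variable {V : Type} [Fintype V] [DecidableEq V] {Γ : SimpleGraph V}

/-- `q` presents `X` as the quotient of `confSet Γ` by the coordinate swap; outside `confSet Γ`
its values carry no information. -/
structure IsSwapQuotient (Γ : SimpleGraph V) {X : Type} [TopologicalSpace X]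
    (q : (V → ℝ) × (V → ℝ) → X) : Prop where
  cont : ContinuousOn q (confSet Γ)
  swap : ∀ p, q p.swap = q p
  eq_or : ∀ p ∈ confSet Γ, ∀ p' ∈ confSet Γ, q p = q p' → p' = p ∨ p' = p.swap
  surj : ∀ z, ∃ p ∈ confSet Γ, q p = z
  opens : ∀ W, IsOpen W → IsOpen (q '' (W ∩ confSet Γ))

theorem permRel_equivalence (X : Type) [TopologicalSpace X] : Equivalence (permRel 2 X) where
  refl f := ⟨1, rfl⟩
  symm := by
    rintro f g ⟨s, h⟩
    refine ⟨s⁻¹, ?_⟩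
    rw [h]
    funext k
    simp
  trans := by
    rintro f g k ⟨s, h⟩ ⟨s', h'⟩
    refine ⟨s' * s, ?_⟩
    rw [h, h']
    rfl

theorem exists_isSwapQuotient (x₀ : UConf 2 ↥(realization Γ)) :
    ∃ q : (V → ℝ) × (V → ℝ) → UConf 2 ↥(realization Γ), IsSwapQuotient Γ q := by
  let toY : Conf 2 ↥(realization Γ) → (V → ℝ) × (V → ℝ) := fun f => ((f.1 0).1, (f.1 1).1)
  have toY_cont : Continuous toY := by
    have h : ∀ k : Fin 2, Continuous fun f : Conf 2 ↥(realization Γ) => (f.1 k).1 := fun k =>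
      continuous_subtype_val.comp ((continuous_apply k).comp continuous_subtype_val)
    exact (h 0).prodMk (h 1)
  let ofY : confSet Γ → Conf 2 ↥(realization Γ) := fun p =>
    ⟨![⟨p.1.1, p.2.1⟩, ⟨p.1.2, p.2.2.1⟩], by
      intro a b h
      fin_cases a <;> fin_cases b
      · rfl
      · exact absurd (congrArg Subtype.val h) p.2.2.2
      · exact absurd (congrArg Subtype.val h).symm p.2.2.2
      · rfl⟩
  have ofY_cont : Continuous ofY := by
    refine Continuous.subtype_mk (continuous_pi fun k => ?_) _
    fin_cases k
    · exact Continuous.subtype_mk (by fun_prop) _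
    · exact Continuous.subtype_mk (by fun_prop) _
  have toY_mem : ∀ f, toY f ∈ confSet Γ := fun f =>
    ⟨(f.1 0).2, (f.1 1).2, fun h => absurd (f.2 (Subtype.ext h)) (by decide)⟩
  have toY_ofY : ∀ p, toY (ofY p) = p.1 := fun p => rfl
  have ofY_toY : ∀ f, ofY ⟨toY f, toY_mem f⟩ = f := by
    intro f
    apply Subtype.ext
    funext k
    fin_cases k <;> rfl
  have perm2 : ∀ s : Equiv.Perm (Fin 2), s = 1 ∨ s = Equiv.swap 0 1 := by decide
  have rel_iff : ∀ f g, permRel 2 ↥(realization Γ) f g ↔ toY f = toY g ∨ toY f = (toY g).swap := by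
    intro f g
    constructor
    · rintro ⟨s, hs⟩
      rcases perm2 s with rfl | rfl
      · left; simp [toY, hs]
      · right; simp [toY, hs]
    · rintro (h | h)
      · refine ⟨1, ?_⟩
        have h1 := congrArg Prod.fst h
        have h2 := congrArg Prod.snd h
        funext k
        fin_cases k
        · exact Subtype.ext h1
        · exact Subtype.ext h2
      · refine ⟨Equiv.swap 0 1, ?_⟩
        have h1 := congrArg Prod.fst h
        have h2 := congrArg Prod.snd h
        funext k
        fin_cases k
        · exact Subtype.ext h1
        · exact Subtype.ext h2
  have mk_eq : ∀ f g : Conf 2 ↥(realization Γ),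
      (Quot.mk (permRel 2 ↥(realization Γ)) f = Quot.mk _ g) ↔
      toY f = toY g ∨ toY f = (toY g).swap := by
    intro f g
    rw [(permRel_equivalence _).quot_mk_eq_iff, rel_iff]
  let q : (V → ℝ) × (V → ℝ) → UConf 2 ↥(realization Γ) := fun p =>
    if h : p ∈ confSet Γ then Quot.mk _ (ofY ⟨p, h⟩) else x₀
  have q_pos : ∀ p (h : p ∈ confSet Γ), q p = Quot.mk _ (ofY ⟨p, h⟩) := fun p h => dif_pos h
  have q_toY : ∀ f, q (toY f) = Quot.mk _ f := by
    intro f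
    rw [q_pos _ (toY_mem f), ofY_toY]
  refine ⟨q, ?_, ?_, ?_, ?_, ?_⟩
  · rw [continuousOn_iff_continuous_domRestrict]
    have h1 : Continuous fun p => Quot.mk (permRel 2 ↥(realization Γ)) (ofY p) :=
      continuous_quot_mk.comp ofY_cont
    convert! h1 using 1
    funext p
    exact q_pos _ p.2
  · intro p
    by_cases h : p ∈ confSet Γ
    · rw [q_pos _ h, q_pos _ (swap_mem_confSet h), mk_eq]
      right; rfl
    · have h' : p.swap ∉ confSet Γ := fun h2 => h (by simpa using swap_mem_confSet h2)
      simp only [q, dif_neg h, dif_neg h']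
  · intro p hp p' hp' h
    rw [q_pos _ hp, q_pos _ hp', mk_eq] at h
    rw [toY_ofY, toY_ofY] at h
    rcases h with h | h
    · exact Or.inl h.symm
    · exact Or.inr (by simp only at h; rw [h, Prod.swap_swap])
  · intro z
    obtain ⟨f, rfl⟩ := Quot.exists_rep z
    exact ⟨toY f, toY_mem f, q_toY f⟩
  · intro W hW
    change IsOpen (Quot.mk (permRel 2 ↥(realization Γ)) ⁻¹' _)
    have h1 : Quot.mk (permRel 2 ↥(realization Γ)) ⁻¹' (q '' (W ∩ confSet Γ)) =
        toY ⁻¹' (W ∪ Prod.swap ⁻¹' W) := by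
      ext f
      constructor
      · rintro ⟨p, ⟨hpW, hp⟩, h⟩
        rw [q_pos _ hp, mk_eq, toY_ofY] at h
        rcases h with h | h
        · left; rw [← h]; exact hpW
        · right
          change (toY f).swap ∈ W
          rw [← h]; exact hpW
      · rintro (h | h)
        · exact ⟨toY f, ⟨h, toY_mem f⟩, q_toY f⟩
        · refine ⟨(toY f).swap, ⟨h, swap_mem_confSet (toY_mem f)⟩, ?_⟩
          rw [q_pos _ (swap_mem_confSet (toY_mem f)), mk_eq]
          right; rfl
    rw [h1]
    exact (hW.union (hW.preimage continuous_swap)).preimage toY_cont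

namespace IsSwapQuotient

variable {X : Type} [TopologicalSpace X] {q : (V → ℝ) × (V → ℝ) → X}

theorem isOpen_inter (hq : IsSwapQuotient Γ q)
    (i j : V × V) : IsOpen (q '' (starSet Γ i ∩ starSet Γ j)) := by
  have h := hq.opens ({p | p.2 i.1 < p.1 i.1} ∩ {p | p.1 i.2 < p.2 i.2} ∩
    ({p | p.2 j.1 < p.1 j.1} ∩ {p | p.1 j.2 < p.2 j.2})) (by
      refine ((isOpen_lt ?_ ?_).inter (isOpen_lt ?_ ?_)).inter
        ((isOpen_lt ?_ ?_).inter (isOpen_lt ?_ ?_)) <;> fun_prop)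
  convert h using 2
  ext p
  constructor
  · rintro ⟨h1, h2⟩
    exact ⟨⟨h1.2, h2.2⟩, h1.1⟩
  · rintro ⟨⟨h1, h2⟩, h3⟩
    exact ⟨⟨h3, h1⟩, ⟨h3, h2⟩⟩

theorem isOpen_star (hq : IsSwapQuotient Γ q)
    (i : V × V) : IsOpen (q '' starSet Γ i) := by
  simpa using hq.isOpen_inter i i

theorem inj_star (hq : IsSwapQuotient Γ q)
    {i : V × V} {p p' : (V → ℝ) × (V → ℝ)} (h : p ∈ starSet Γ i)
    (hp' : p' ∈ starSet Γ i) (he : q p = q p') : p = p' := by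
  rcases hq.eq_or p h.1 p' hp'.1 he with e | e
  · exact e.symm
  · subst e
    exact absurd h.2.1 (not_lt_of_gt hp'.2.1)

/-- Paths inside the image of a star lift to the star. -/
theorem exists_lift (hq : IsSwapQuotient Γ q)
    {i : V × V} {x y : X} (γ : Path x y) (hγ : ∀ t, γ t ∈ q '' starSet Γ i) :
    ∃ (a b : (V → ℝ) × (V → ℝ)) (α : Path a b), ∀ t, α t ∈ starSet Γ i ∧ γ t = q (α t) := by
  choose α hα hqα using hγ
  have hc : Continuous α := by
    rw [continuous_iff_continuousAt]
    intro t N hN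
    obtain ⟨W, hWN, hW, htW⟩ := mem_nhds_iff.1 hN
    have h1 : IsOpen (q '' ((W ∩ ({p | p.2 i.1 < p.1 i.1} ∩ {p | p.1 i.2 < p.2 i.2})) ∩
        confSet Γ)) := by
      refine hq.opens _ (hW.inter ((isOpen_lt ?_ ?_).inter (isOpen_lt ?_ ?_))) <;> fun_prop
    have h2 : γ t ∈ q '' ((W ∩ ({p | p.2 i.1 < p.1 i.1} ∩ {p | p.1 i.2 < p.2 i.2})) ∩
        confSet Γ) := ⟨α t, ⟨⟨htW, (hα t).2⟩, (hα t).1⟩, hqα t⟩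
    have h3 := γ.continuous.continuousAt.preimage_mem_nhds (h1.mem_nhds h2)
    refine Filter.mem_map.2 (Filter.mem_of_superset h3 ?_)
    rintro s ⟨p, ⟨⟨hpW, hp1⟩, hp2⟩, hp⟩
    have h4 : p = α s := hq.inj_star (i := i) ⟨hp2, hp1⟩ (hα s) (hp.trans (hqα s).symm)
    change α s ∈ N
    rw [← h4]
    exact hWN hpW
  exact ⟨α 0, α 1, ⟨⟨α, hc⟩, rfl, rfl⟩, fun t => ⟨hα t, (hqα t).symm⟩⟩

end IsSwapQuotient

end Quotient

/-! ### The transition cocycle on the cover by stars -/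

section Transition

variable {V G : Type} [Group G] {Γ : SimpleGraph V} {L : V → V → V → G}

/-- The value of `L` on an edge, extended by `1` to degenerate edges. -/
def edgeVal (L : V → V → V → G) (u u₁ x : V) : G := if u = u₁ then 1 else L u u₁ x

/-- Transition from the star of `i` to the star of `j`, moving the first point first. -/
def transVal (L : V → V → V → G) (i j : V × V) : G :=
  edgeVal L i.1 j.1 i.2 * edgeVal L i.2 j.2 j.1

theorem transVal_self (i : V × V) : transVal L i i = 1 := by simp [transVal, edgeVal]

theorem edgeVal_mul (hL : IsCocycle Γ L) {a b u u' u'' x : V} (hab : Γ.Adj a b)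
    (hu : u = a ∨ u = b) (hu' : u' = a ∨ u' = b) (hu'' : u'' = a ∨ u'' = b)
    (h : x ≠ u) (h' : x ≠ u') (h'' : x ≠ u'') :
    edgeVal L u u' x * edgeVal L u' u'' x = edgeVal L u u'' x := by
  unfold edgeVal
  by_cases e : u = u'
  · subst e; simp
  by_cases e' : u' = u''
  · subst e'; simp
  have e'' : u = u'' := by grind
  subst e''
  have hadj : Γ.Adj u u' := by
    rcases hu with rfl | rfl <;> rcases hu' with rfl | rfl
    · exact absurd rfl e
    · exact hab
    · exact hab.symm
    · exact absurd rfl e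
  rw [if_neg e, if_neg e', if_pos rfl, hL.inv u u' x hadj h h', mul_inv_cancel]

theorem edgeVal_comm (hL : IsCocycle Γ L) {a b c d u u' v v' : V} (hab : Γ.Adj a b)
    (hcd : Γ.Adj c d) (hu : u = a ∨ u = b) (hu' : u' = a ∨ u' = b) (hv : v = c ∨ v = d)
    (hv' : v' = c ∨ v' = d) (h1 : u ≠ v) (h2 : u ≠ v') (h3 : u' ≠ v) (h4 : u' ≠ v') :
    edgeVal L u u' v * edgeVal L v v' u' = edgeVal L v v' u * edgeVal L u u' v' := by
  unfold edgeVal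
  by_cases e : u = u'
  · subst e; simp
  by_cases e' : v = v'
  · subst e'; simp
  have aux : ∀ {a b u u' : V}, Γ.Adj a b → (u = a ∨ u = b) → (u' = a ∨ u' = b) → u ≠ u' →
      Γ.Adj u u' := by
    rintro a b u u' hab (rfl | rfl) (rfl | rfl) hne
    · exact absurd rfl hne
    · exact hab
    · exact hab.symm
    · exact absurd rfl hne
  rw [if_neg e, if_neg e', if_neg e', if_neg e]
  exact hL.sq u u' v v' (aux hab hu hu' e) (aux hcd hv hv' e') h1 h2 h3 h4

variable [Fintype V] [DecidableEq V]

/-- The vertices at which two fixed points dominate each other: two disjoint sets, each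
contained in an edge. -/
theorem exists_edges {p : (V → ℝ) × (V → ℝ)} (hp : p ∈ confSet Γ) :
    ∃ a b c d, Γ.Adj a b ∧ Γ.Adj c d ∧ (∀ i, p ∈ starSet Γ i → i.1 = a ∨ i.1 = b) ∧
      (∀ i, p ∈ starSet Γ i → i.2 = c ∨ i.2 = d) ∧
      ∀ i j, p ∈ starSet Γ i → p ∈ starSet Γ j → i.1 ≠ j.2 := by
  obtain ⟨a, b, hab, -, h1⟩ := exists_edge hp.1 hp.2.1
  obtain ⟨c, d, hcd, -, h2⟩ := exists_edge hp.2.1 hp.1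
  refine ⟨a, b, c, d, hab, hcd, fun i hi => h1 _ hi.2.1, fun i hi => h2 _ hi.2.2, ?_⟩
  intro i j hi hj e
  have h3 := hi.2.1
  have h4 := hj.2.2
  rw [e] at h3
  exact lt_asymm h3 h4

theorem transVal_mul (hL : IsCocycle Γ L) {i j k : V × V} {p : (V → ℝ) × (V → ℝ)}
    (hi : p ∈ starSet Γ i) (hj : p ∈ starSet Γ j) (hk : p ∈ starSet Γ k) :
    transVal L i j * transVal L j k = transVal L i k := by
  obtain ⟨a, b, c, d, hab, hcd, h1, h2, h3⟩ := exists_edges hi.1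
  have e1 := edgeVal_comm hL hab hcd (h1 j hj) (h1 k hk) (h2 i hi) (h2 j hj) (h3 j i hj hi)
    (h3 j j hj hj) (h3 k i hk hi) (h3 k j hk hj)
  have e2 := edgeVal_mul hL hab (h1 i hi) (h1 j hj) (h1 k hk) (h3 i i hi hi).symm
    (h3 j i hj hi).symm (h3 k i hk hi).symm
  have e3 := edgeVal_mul hL hcd (h2 i hi) (h2 j hj) (h2 k hk) (h3 k i hk hi)
    (h3 k j hk hj) (h3 k k hk hk)
  unfold transVal
  rw [← e2, ← e3]
  simp only [mul_assoc]
  rw [← mul_assoc (edgeVal L i.2 j.2 j.1), ← e1]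
  simp only [mul_assoc]

theorem transVal_swap (hL : IsCocycle Γ L) {i j : V × V} {p : (V → ℝ) × (V → ℝ)}
    (hi : p ∈ starSet Γ i) (hj : p ∈ starSet Γ j) :
    transVal L i.swap j.swap = transVal L i j := by
  obtain ⟨a, b, c, d, hab, hcd, h1, h2, h3⟩ := exists_edges hi.1
  exact (edgeVal_comm hL hab hcd (h1 i hi) (h1 j hj) (h2 i hi) (h2 j hj) (h3 i i hi hi)
    (h3 i j hi hj) (h3 j i hj hi) (h3 j j hj hj)).symm

open Topology

variable {X : Type} [TopologicalSpace X] {q : (V → ℝ) × (V → ℝ) → X}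

/-- The transition function between the images of the stars of `i` and `j`.  The image of the
star of `j` is also the image of the star of `j.swap`, which may be the one meeting the star
of `i`. -/
def transFun (Γ : SimpleGraph V) (q : (V → ℝ) × (V → ℝ) → X) (L : V → V → V → G)
    (i j : V × V) (z : X) : G :=
  if z ∈ q '' (starSet Γ i ∩ starSet Γ j) then transVal L i j else transVal L i j.swap

theorem IsSwapQuotient.exists_rep (hq : IsSwapQuotient Γ q) {i j : V × V} {z : X}
    (hi : z ∈ q '' starSet Γ i) (hj : z ∈ q '' starSet Γ j) :
    ∃ p ∈ starSet Γ i, q p = z ∧ ∃ j', p ∈ starSet Γ j' ∧ (j' = j ∨ j' = j.swap) := by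
  obtain ⟨p, hp, rfl⟩ := hi
  obtain ⟨p', hp', he⟩ := hj
  refine ⟨p, hp, rfl, ?_⟩
  rcases hq.eq_or p' hp'.1 p hp.1 he with rfl | rfl
  · exact ⟨j, hp', Or.inl rfl⟩
  · exact ⟨j.swap, swap_mem_starSet hp', Or.inr rfl⟩

theorem transFun_eq (hq : IsSwapQuotient Γ q) (hL : IsCocycle Γ L) {i i' j j' : V × V}
    {p : (V → ℝ) × (V → ℝ)} (hi : p ∈ starSet Γ i') (hj : p ∈ starSet Γ j')
    (hii : i' = i ∨ i' = i.swap) (hjj : j' = j ∨ j' = j.swap) :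
    transFun Γ q L i j (q p) = transVal L i' j' := by
  have base : ∀ {i j j' : V × V} {p : (V → ℝ) × (V → ℝ)}, p ∈ starSet Γ i → p ∈ starSet Γ j' →
      (j' = j ∨ j' = j.swap) → transFun Γ q L i j (q p) = transVal L i j' := by
    rintro i j j' p hi hj (rfl | rfl)
    · exact if_pos ⟨p, ⟨hi, hj⟩, rfl⟩
    · refine if_neg ?_
      rintro ⟨p', ⟨h1, h2⟩, he⟩
      obtain rfl := hq.inj_star h1 hi he
      exact lt_asymm h2.2.1 hj.2.2
  rcases hii with rfl | rfl
  · exact base hi hj hjj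
  · rw [← hq.swap p, base (i := i) (j' := j'.swap) (by simpa using swap_mem_starSet hi)
      (swap_mem_starSet hj) (by rcases hjj with rfl | rfl <;> simp)]
    have := transVal_swap hL hi hj
    simpa using this

theorem transFun_loc (hq : IsSwapQuotient Γ q) (hL : IsCocycle Γ L) (i j : V × V) (z : X)
    (hi : z ∈ q '' starSet Γ i) (hj : z ∈ q '' starSet Γ j) :
    ∀ᶠ y in 𝓝 z, transFun Γ q L i j y = transFun Γ q L i j z := by
  obtain ⟨p, hp, rfl, j', hj', h⟩ := hq.exists_rep hi hj
  filter_upwards [(hq.isOpen_inter i j').mem_nhds ⟨p, ⟨hp, hj'⟩, rfl⟩]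
  rintro _ ⟨p', ⟨h1, h2⟩, rfl⟩
  rw [transFun_eq hq hL h1 h2 (Or.inl rfl) h, transFun_eq hq hL hp hj' (Or.inl rfl) h]

theorem transFun_self (hq : IsSwapQuotient Γ q) (hL : IsCocycle Γ L) (i : V × V) (z : X)
    (hi : z ∈ q '' starSet Γ i) : transFun Γ q L i i z = 1 := by
  obtain ⟨p, hp, rfl⟩ := hi
  rw [transFun_eq hq hL hp hp (Or.inl rfl) (Or.inl rfl), transVal_self]

theorem transFun_comp (hq : IsSwapQuotient Γ q) (hL : IsCocycle Γ L) (i j k : V × V) (z : X)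
    (hi : z ∈ q '' starSet Γ i) (hj : z ∈ q '' starSet Γ j) (hk : z ∈ q '' starSet Γ k) :
    transFun Γ q L i j z * transFun Γ q L j k z = transFun Γ q L i k z := by
  obtain ⟨p, hp, rfl, j', hj', hjj⟩ := hq.exists_rep hi hj
  obtain ⟨p', hp', he, k', hk', hkk⟩ := hq.exists_rep hi hk
  obtain rfl := hq.inj_star hp' hp he
  rw [transFun_eq hq hL hp hj' (Or.inl rfl) hjj, transFun_eq hq hL hj' hk' hjj hkk,
    transFun_eq hq hL hp hk' (Or.inl rfl) hkk, transVal_mul hL hp hj' hk']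

end Transition

/-! ### Edge classes in the fundamental group -/

section Dictionary

open Topology

set_option linter.unusedSectionVars false

variable {V : Type} [Fintype V] [DecidableEq V] {Γ : SimpleGraph V}
  {X : Type} [TopologicalSpace X] {q : (V → ℝ) × (V → ℝ) → X} {x₀ : X}

/-- The class in the opposite fundamental group of the image of the straight path from `a` to
`b`, closed up along the chosen paths `T`. -/
def lineClass (hq : IsSwapQuotient Γ q) (T : ∀ x, Path.Homotopic.Quotient x₀ x)
    (a b : (V → ℝ) × (V → ℝ)) : (FundamentalGroup X x₀)ᵐᵒᵖ :=
  br hq.cont (fun _ _ c => bracket T c) a b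

/-- The class of the move of one point from `u` to `u'` while the other point stays at `x`. -/
def edgeClass (hq : IsSwapQuotient Γ q) (T : ∀ x, Path.Homotopic.Quotient x₀ x)
    (u u' x : V) : (FundamentalGroup X x₀)ᵐᵒᵖ :=
  lineClass hq T (vtx (u, x)) (vtx (u', x))

variable (hq : IsSwapQuotient Γ q) (T : ∀ x, Path.Homotopic.Quotient x₀ x)

theorem lineClass_mul {S : Set ((V → ℝ) × (V → ℝ))} (hS : Convex ℝ S) (hSD : S ⊆ confSet Γ)
    {a b c : (V → ℝ) × (V → ℝ)} (ha : a ∈ S) (hb : b ∈ S) (hc : c ∈ S) :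
    lineClass hq T a b * lineClass hq T b c = lineClass hq T a c :=
  br_mul hq.cont _ (fun _ _ _ a b => bracket_trans T a b) hS hSD ha hb hc

theorem lineClass_self {a : (V → ℝ) × (V → ℝ)} (ha : a ∈ confSet Γ) : lineClass hq T a a = 1 :=
  br_self hq.cont _ (fun _ _ _ a b => bracket_trans T a b) ha

theorem lineClass_swap (a b : (V → ℝ) × (V → ℝ)) :
    lineClass hq T a.swap b.swap = lineClass hq T a b :=
  br_symm_map hq.cont _ (LinearEquiv.prodComm ℝ (V → ℝ) (V → ℝ)).toLinearMap
    (fun _ => rfl) (fun a => hq.swap a) (fun _ ha => swap_mem_confSet ha) a b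

theorem lineClass_snd (v v' x : V) :
    lineClass hq T (vtx (x, v)) (vtx (x, v')) = edgeClass hq T v v' x :=
  lineClass_swap hq T (vtx (v, x)) (vtx (v', x))

theorem edgeVal_edgeClass {u u' x : V} (h : vtx (u, x) ∈ confSet Γ) :
    edgeVal (edgeClass hq T) u u' x = edgeClass hq T u u' x := by
  unfold edgeVal
  split_ifs with e
  · subst e
    exact (lineClass_self hq T h).symm
  · rfl

theorem vtx_mem_confSet_of_ne (hv : ∀ v, basisVec v ∈ realization Γ) {u v : V} (h : u ≠ v) :
    vtx (u, v) ∈ confSet Γ := by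
  refine ⟨hv u, hv v, fun e => ?_⟩
  have := congrFun e u
  simp [vtx, basisVec_self, basisVec_ne h] at this

theorem isCocycle_edgeClass (hv : ∀ v, basisVec v ∈ realization Γ) :
    IsCocycle Γ (edgeClass hq T) where
  inv u u' x h h1 h2 := by
    obtain ⟨p, hp, hp', -⟩ := exists_center (Or.inr h) (Or.inl rfl : x = x ∨ Γ.Adj x x) (hv u)
      (hv x) h1.symm h1.symm h2.symm h2.symm
    obtain ⟨S, hS, hSc, -, h3, h4, -⟩ := exists_convex_cell hp hp'
    refine eq_inv_of_mul_eq_one_left ?_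
    exact (lineClass_mul hq T hS hSc h4 h3 h4).trans (lineClass_self hq T (hSc h4))
  sq u u' v v' hu hv' h1 h2 h3 h4 := by
    obtain ⟨p, hp, -, -, hp'⟩ := exists_center (Or.inr hu) (Or.inr hv') (hv u)
      (hv v) h1 h2 h3 h4
    obtain ⟨S, hS, hSc, -, e1, e2, e3, e4⟩ := exists_convex_cell hp hp'
    rw [← lineClass_snd hq T v v' u', ← lineClass_snd hq T v v' u]
    exact (lineClass_mul hq T hS hSc e1 e4 e2).trans (lineClass_mul hq T hS hSc e1 e3 e2).symm

theorem transVal_edgeClass {i j : V × V} {p : (V → ℝ) × (V → ℝ)}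
    (hi : p ∈ starSet Γ i) (hj : p ∈ starSet Γ j) :
    transVal (edgeClass hq T) i j = (lineClass hq T p (vtx i))⁻¹ * lineClass hq T p (vtx j) := by
  obtain ⟨S, hS, hSc, e0, e1, e2, e3, e4⟩ := exists_convex_cell hi hj
  unfold transVal
  have h5 : vtx (i.2, j.1) ∈ confSet Γ := swap_mem_confSet (hSc e4)
  rw [edgeVal_edgeClass hq T (hSc e1), edgeVal_edgeClass hq T h5,
    ← lineClass_snd hq T i.2 j.2 j.1, eq_inv_mul_iff_mul_eq]
  exact (congrArg _ (lineClass_mul hq T hS hSc e1 e4 e2)).trans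
    (lineClass_mul hq T hS hSc e0 e1 e2)

/-- The class of the straight path from `z` to the centre of the star of `i`. -/
def toCentre (i : V × V) (z : X) : (FundamentalGroup X x₀)ᵐᵒᵖ :=
  if h : z ∈ q '' starSet Γ i then lineClass hq T h.choose (vtx i) else 1

theorem toCentre_eq {i j : V × V} {p : (V → ℝ) × (V → ℝ)} (hj : p ∈ starSet Γ j)
    (h : j = i ∨ j = i.swap) : toCentre hq T i (q p) = lineClass hq T p (vtx j) := by
  have base : ∀ {i : V × V} {p : (V → ℝ) × (V → ℝ)}, p ∈ starSet Γ i →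
      toCentre hq T i (q p) = lineClass hq T p (vtx i) := by
    intro i p hp
    have h : q p ∈ q '' starSet Γ i := ⟨p, hp, rfl⟩
    rw [toCentre, dif_pos h, hq.inj_star h.choose_spec.1 hp h.choose_spec.2]
  rcases h with rfl | rfl
  · exact base hj
  · rw [← hq.swap p, base (i := i) (by simpa using swap_mem_starSet hj)]
    exact lineClass_swap hq T p (vtx i.swap)

theorem segment_subset_starSet {i : V × V} {p : (V → ℝ) × (V → ℝ)} (h : p ∈ starSet Γ i) :
    segment ℝ p (vtx i) ⊆ starSet Γ i := by
  rw [segment_symm]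
  exact (starConvex_starSet i).segment_subset h

theorem IsSwapQuotient.exists_path (hq : IsSwapQuotient Γ q) {a b : (V → ℝ) × (V → ℝ)}
    (h : segment ℝ a b ⊆ confSet Γ) :
    ∃ γ : Path (q a) (q b), ∀ t, γ t = q (Path.segment a b t) :=
  ⟨(Path.segment a b).map' (hq.cont.mono (by rw [Path.range_segment]; exact h)), fun _ => rfl⟩

/-- Comparison of the fundamental group with a group carrying a cocycle `L`: a homomorphism `φ`
carries the edge classes to `L` up to a gauge transformation, and it has as a left inverse, up to
conjugation, any homomorphism carrying `L` to the edge classes up to a gauge transformation. -/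
theorem exists_dictionary (hv : ∀ v, basisVec v ∈ realization Γ) {G : Type} [Group G]
    {L : V → V → V → G} (hL : IsCocycle Γ L) :
    ∃ (φ : (FundamentalGroup X x₀)ᵐᵒᵖ →* G) (ρ : V → V → G), (∀ x y, ρ x y = ρ y x) ∧
      (∀ u u' x, Γ.Adj u u' → x ≠ u → x ≠ u' →
        φ (edgeClass hq T u u' x) = ρ u x * L u u' x * (ρ u' x)⁻¹) ∧
      ∀ (ψ : G →* (FundamentalGroup X x₀)ᵐᵒᵖ) (σ : V → V → (FundamentalGroup X x₀)ᵐᵒᵖ),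
        (∀ x y, σ x y = σ y x) →
        (∀ u u' x, Γ.Adj u u' → x ≠ u → x ≠ u' →
          ψ (L u u' x) = σ u x * edgeClass hq T u u' x * (σ u' x)⁻¹) →
        ∃ k, ∀ h, ψ (φ h) = k * h * k⁻¹ := by
  have hidx : ∀ x : X, ∃ i, x ∈ q '' starSet Γ i := by
    intro x
    obtain ⟨p, hp, rfl⟩ := hq.surj x
    obtain ⟨i, hi⟩ := exists_mem_starSet hp
    exact ⟨i, p, hi, rfl⟩
  choose idx hidx using hidx
  obtain ⟨φ, ρ, h1, h2, h3⟩ := exists_compare (U := fun i => q '' starSet Γ i)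
    (fun i => hq.isOpen_star i) idx hidx (transFun Γ q L) (transFun_loc hq hL)
    (transFun_self hq hL) (transFun_comp hq hL) T (fun i => q (vtx i)) (toCentre hq T)
    (by
      intro i x y γ hγ
      obtain ⟨a, b, α, hα⟩ := hq.exists_lift γ hγ
      have ha : a ∈ starSet Γ i := by simpa using (hα 0).1
      have hb : b ∈ starSet Γ i := by simpa using (hα 1).1
      obtain rfl : x = q a := by simpa using (hα 0).2
      obtain rfl : y = q b := by simpa using (hα 1).2
      have key := hl_path_mul hq.cont (fun _ _ c => bracket T c)
        (fun _ _ _ a b => bracket_trans T a b) (starConvex_starSet i) (fun p hp => hp.1) α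
        (fun t => (hα t).1) (segment_subset_starSet hb) (segment_subset_starSet ha) γ
        (fun t => (hα t).2)
      rw [toCentre_eq hq T ha (Or.inl rfl), toCentre_eq hq T hb (Or.inl rfl)]
      exact eq_mul_inv_of_mul_eq key)
    (by
      rintro i _ ⟨p, hp, rfl⟩
      have hs := segment_subset_starSet hp
      obtain ⟨γ, hγ⟩ := hq.exists_path (hs.trans fun _ h => h.1)
      refine ⟨γ, fun t => ?_, ?_⟩
      · rw [hγ]
        exact ⟨_, hs (by rw [← Path.range_segment]; exact ⟨t, rfl⟩), rfl⟩
      · rw [toCentre_eq hq T hp (Or.inl rfl)]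
        exact br_eq_of_path hq.cont (fun _ _ c => bracket T c) (hs.trans fun _ h => h.1) γ hγ)
  refine ⟨φ, fun x y => ρ (x, y), ?_, ?_, ?_⟩
  · intro x y
    by_cases e : x = y
    · rw [e]
    have hm := vtx_mem_starSet (vtx_mem_confSet_of_ne hv e)
    have hm' := vtx_mem_starSet (vtx_mem_confSet_of_ne hv (Ne.symm e))
    have hsw : q (vtx (x, y)) = q (vtx (y, x)) := (hq.swap (vtx (y, x)))
    refine h2 (x, y) (y, x) ⟨_, hm, rfl⟩ ⟨_, hm', hsw.symm⟩ hsw ?_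
    rw [transFun_eq hq hL hm hm (Or.inl rfl) (Or.inr rfl), transVal_self]
  · intro u u' x h hx hx'
    obtain ⟨p, hp, hp', -⟩ := exists_center (Or.inr h) (Or.inl rfl : x = x ∨ Γ.Adj x x) (hv u)
      (hv x) hx.symm hx.symm hx'.symm hx'.symm
    have h4 := h1 (u, x) (u', x) (q p) ⟨p, hp, rfl⟩ ⟨p, hp', rfl⟩
    rw [toCentre_eq hq T hp (Or.inl rfl), toCentre_eq hq T hp' (Or.inl rfl),
      ← transVal_edgeClass hq T hp hp', transFun_eq hq hL hp hp' (Or.inl rfl) (Or.inl rfl)] at h4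
    simpa [transVal, edgeVal, h.ne] using h4
  · intro ψ σ hσ hψ
    refine h3 ψ (fun i => σ i.1 i.2) ?_
    intro i j z hi hj
    obtain ⟨p, hp, rfl, j', hj', hjj⟩ := hq.exists_rep hi hj
    have hs : σ j.1 j.2 = σ j'.1 j'.2 := by
      rcases hjj with rfl | rfl
      · rfl
      · exact hσ _ _
    have hedge : ∀ u u' x, (u = u' ∨ Γ.Adj u u') → x ≠ u → x ≠ u' →
        ψ (edgeVal L u u' x) = σ u x * edgeVal (edgeClass hq T) u u' x * (σ u' x)⁻¹ := by
      rintro u u' x (rfl | h) hx hx'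
      · simp [edgeVal]
      · simpa [edgeVal, h.ne] using hψ u u' x h hx hx'
    obtain ⟨a, b, c, d, hab, hcd, k1, k2, k3⟩ := exists_edges hp.1
    have aux : ∀ {a b u u' : V}, Γ.Adj a b → (u = a ∨ u = b) → (u' = a ∨ u' = b) →
        u = u' ∨ Γ.Adj u u' := by
      rintro a b u u' hab (rfl | rfl) (rfl | rfl)
      · exact Or.inl rfl
      · exact Or.inr hab
      · exact Or.inr hab.symm
      · exact Or.inl rfl
    rw [transFun_eq hq hL hp hj' (Or.inl rfl) hjj, toCentre_eq hq T hp (Or.inl rfl),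
      toCentre_eq hq T hj' hjj, mul_assoc (σ i.1 i.2), ← transVal_edgeClass hq T hp hj', hs]
    unfold transVal
    rw [map_mul, hedge _ _ _ (aux hab (k1 i hp) (k1 j' hj')) (k3 i i hp hp).symm
      (k3 j' i hj' hp).symm, hedge _ _ _ (aux hcd (k2 i hp) (k2 j' hj')) (k3 j' i hj' hp)
      (k3 j' j' hj' hj'), hσ i.2 j'.1, hσ j'.2 j'.1]
    group

/-- If any two pairs of distinct vertices are related by moves of one point along an edge, then
`X` is path connected. -/
theorem IsSwapQuotient.joined (hq : IsSwapQuotient Γ q) (hv : ∀ v, basisVec v ∈ realization Γ)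
    (hκ : ∀ (K : Type) (κ : V → V → K), (∀ x y, κ x y = κ y x) →
      (∀ u u' x, Γ.Adj u u' → x ≠ u → x ≠ u' → κ u x = κ u' x) →
      ∀ x y x' y', x ≠ y → x' ≠ y' → κ x y = κ x' y') (z z' : X) : Joined z z' := by
  have h1 : ∀ z : X, ∃ i : V × V, i.1 ≠ i.2 ∧ Joined z (q (vtx i)) := by
    intro z
    obtain ⟨p, hp, rfl⟩ := hq.surj z
    obtain ⟨i, hi⟩ := exists_mem_starSet hp
    obtain ⟨γ, -⟩ := hq.exists_path ((segment_subset_starSet hi).trans fun _ h => h.1)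
    exact ⟨i, starSet_ne hi, ⟨γ⟩⟩
  have h2 := hκ (ZerothHomotopy X) (fun u v => Quotient.mk (pathSetoid X) (q (vtx (u, v))))
    (fun x y => congrArg _ (hq.swap (vtx (y, x)))) (by
      intro u u' x h hx hx'
      obtain ⟨p, hp, hp', -⟩ := exists_center (Or.inr h) (Or.inl rfl : x = x ∨ Γ.Adj x x) (hv u)
        (hv x) hx.symm hx.symm hx'.symm hx'.symm
      obtain ⟨S, hS, hSc, -, e1, e2, -⟩ := exists_convex_cell hp hp'
      obtain ⟨γ, -⟩ := hq.exists_path ((hS.segment_subset e1 e2).trans hSc)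
      exact Quotient.sound ⟨γ⟩)
  obtain ⟨i, hi, hz⟩ := h1 z
  obtain ⟨j, hj, hz'⟩ := h1 z'
  exact (hz.trans (Quotient.exact (h2 i.1 i.2 j.1 j.2 hi hj))).trans hz'.symm

end Dictionary

/-! ### The isomorphism -/

section Assembly

variable {V : Type} [Fintype V] [DecidableEq V] {Γ : SimpleGraph V}

/-- A group `G` with a generating cocycle `L` that is universal up to coboundaries is the
2-braid group, provided that moves with trivial label connect all configurations. -/
theorem nonempty_mulEquiv_of_universal (hv : ∀ v, basisVec v ∈ realization Γ)
    {G : Type} [Group G] {L : V → V → V → G} (hL : IsCocycle Γ L)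
    (hgen : ∀ S : Subgroup G,
      (∀ u u' x, Γ.Adj u u' → x ≠ u → x ≠ u' → L u u' x ∈ S) → S = ⊤)
    (hconn : ∀ (K : Type) (κ : V → V → K), (∀ x y, κ x y = κ y x) →
      (∀ u u' x, Γ.Adj u u' → x ≠ u → x ≠ u' → L u u' x = 1 → κ u x = κ u' x) →
      ∀ x y x' y', x ≠ y → x' ≠ y' → κ x y = κ x' y')
    (huniv : ∀ (H : Type) [Group H] (E : V → V → V → H), IsCocycle Γ E →
      ∃ (σ : V → V → H) (ψ : G →* H), (∀ x y, σ x y = σ y x) ∧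
        ∀ u u' x, Γ.Adj u u' → x ≠ u → x ≠ u' →
          ψ (L u u' x) = σ u x * E u u' x * (σ u' x)⁻¹)
    (x₀ : UConf 2 ↥(realization Γ)) :
    Nonempty (FundamentalGroup (UConf 2 ↥(realization Γ)) x₀ ≃* G) := by
  obtain ⟨q, hq⟩ := exists_isSwapQuotient x₀
  have hj : ∀ z, Joined x₀ z := hq.joined hv (fun K κ h1 h2 =>
    hconn K κ h1 fun u u' x h hx hx' _ => h2 u u' x h hx hx') x₀
  let T : ∀ z, Path.Homotopic.Quotient x₀ z := fun z => .mk (hj z).somePath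
  obtain ⟨σ, ψ, hσ, hψ⟩ := huniv _ (edgeClass hq T) (isCocycle_edgeClass hq T hv)
  obtain ⟨φ, ρ, hρ, hφ, hφψ⟩ := exists_dictionary hq T hv hL
  obtain ⟨k, hk⟩ := hφψ ψ σ hσ hψ
  have hcalc : ∀ u u' x, Γ.Adj u u' → x ≠ u → x ≠ u' → φ (ψ (L u u' x)) =
      (φ (σ u x) * ρ u x) * L u u' x * (φ (σ u' x) * ρ u' x)⁻¹ := by
    intro u u' x h hx hx'
    rw [hψ u u' x h hx hx', map_mul, map_mul, map_inv, hφ u u' x h hx hx']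
    group
  -- The gauge `φ σ * ρ` does not change along moves with trivial label, hence is constant.
  have hconst := hconn G (fun u x => φ (σ u x) * ρ u x)
    (fun x y => by rw [hσ x y, hρ x y]) (by
      intro u u' x h hx hx' h1
      have h2 := hcalc u u' x h hx hx'
      rw [h1, map_one, map_one, mul_one] at h2
      exact (mul_inv_eq_one.1 h2.symm))
  have hinj : Function.Injective ψ := by
    by_cases hne : ∃ a b : V, a ≠ b
    · obtain ⟨a, b, hab⟩ := hne
      set g := φ (σ a b) * ρ a b with hg
      have hS := hgen ((φ.comp ψ).eqLocus (MulAut.conj g).toMonoidHom) (by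
        intro u u' x h hx hx'
        change φ (ψ (L u u' x)) = g * L u u' x * g⁻¹
        rw [hcalc u u' x h hx hx', hconst u x a b hx.symm hab, hconst u' x a b hx'.symm hab])
      intro y y' hy
      have hc : ∀ y, φ (ψ y) = g * y * g⁻¹ := fun y => by
        have : y ∈ (φ.comp ψ).eqLocus (MulAut.conj g).toMonoidHom := hS ▸ Subgroup.mem_top y
        exact this
      have := hc y
      rw [hy, hc y'] at this
      exact (mul_left_cancel (mul_right_cancel this)).symm
    · have hbot : (⊥ : Subgroup G) = ⊤ := hgen ⊥ fun u u' x h => absurd ⟨u, u', h.ne⟩ hne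
      have := (Subgroup.subsingleton_iff (G := G)).1 (subsingleton_of_bot_eq_top hbot)
      exact Function.injective_of_subsingleton _
  have hsurj : Function.Surjective ψ := by
    intro h
    refine ⟨φ (k⁻¹ * h * k), ?_⟩
    rw [hk]
    group
  exact ⟨(MulEquiv.inv' _).trans (MulEquiv.ofBijective ψ ⟨hinj, hsurj⟩).symm⟩

end Assembly

/-- If `Γ = (T, ℓ)` is a bunch of grapes such that some path in the stem
`T` contains every vertex carrying a grape, then `B₂(Γ)` is isomorphic to a right-angled
Artin group. -/
theorem braid2_grapes_isomorphic_to_RAAG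
    (VT : Type) [Fintype VT] [DecidableEq VT] (T : SimpleGraph VT) (ℓ : VT → ℕ)
    (htree : T.IsTree)
    (hpath : ∃ (a b : VT) (p : T.Walk a b), p.IsPath ∧
      ∀ v : VT, 1 ≤ ℓ v → v ∈ p.support) :
    ∃ (W : Type) (_ : Fintype W) (Λ : SimpleGraph W),
      ∀ x : UConf 2 ↥(realization (bunchOfGrapes T ℓ)),
        Nonempty
          (FundamentalGroup (UConf 2 ↥(realization (bunchOfGrapes T ℓ))) x ≃* RAAG Λ) := by
  obtain ⟨_, D, hD⟩ := exists_grapeTree T ℓ htree hpath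
  by_cases hne : ∃ c, c ≠ D.r
  · obtain ⟨c, hc⟩ := hne
    obtain ⟨c₁, h1, h2⟩ := WellFounded.has_min (wellFounded_lt (α := GrapeVert VT ℓ))
      {x | x ≠ D.r} ⟨c, hc⟩
    have h2' : ∀ x, x ≠ D.r → c₁ ≤ x := fun x hx => not_lt.1 (h2 x hx)
    have hr : D.par c₁ = D.r := D.par_first h1 h2'
    have hv : ∀ v, basisVec v ∈ realization (bunchOfGrapes T ℓ) := by
      intro v
      by_cases hvr : v = D.r
      · subst hvr
        have h := D.adj_par c₁ h1
        rw [hr] at h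
        exact segment_subset_realization h (left_mem_segment ℝ _ _)
      · exact segment_subset_realization (D.adj_par v hvr) (right_mem_segment ℝ _ _)
    obtain ⟨L, hL, hgen, hconn, huniv⟩ := D.exists_universal hD h1 h2'
    exact ⟨D.Gen c₁, Fintype.ofFinite _, D.genGraph c₁, fun x =>
      nonempty_mulEquiv_of_universal hv hL hgen hconn huniv x⟩
  · push Not at hne
    -- A graph with a single vertex has no edge, so its realization is empty.
    refine ⟨Empty, inferInstance, ⊥, fun x => ?_⟩
    exfalso
    obtain ⟨q, hq⟩ := exists_isSwapQuotient x
    obtain ⟨p, hp, -⟩ := hq.surj x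
    obtain ⟨a, b, hab, -⟩ := exists_edge hp.1 hp.2.1
    exact hab.ne ((hne a).trans (hne b).symm)

end GraphBraid
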